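/- arXiv:2604.01061 — 3 statements merged into one kernel-verified Lean document; each statement's English description precedes it below -/
import Mathlib

section
/- Let 𝓗 be an arrangement of n hyperplanes in general position in ℝ³ and let S be a set of chambers with |S| = Σ_{i=0}^3 C(k,i) for some real k ≥ 2 satisfying (k−2)/(n−2) ≤ c for some constant c < 1 (generalized binomial coefficients). Let L be the number of pairs {e,f} ⊆ [n] such that the entire line H_e ∩ H_f is contained in T_S, and let M be the number of e ∈ [n] such that the entire plane H_e is contained in T_S. Then L ≤ C(k,2)·(k−2)/(n−2), M ≤ k(k−1)(k−2)/((n−1)(n−2)) ≤ k·(k−2)/(n−2), and consequently L + M ≤ c · Σ_{i=0}^2 C(k,i). -/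
open Set Topology

noncomputable section

/-- A hyperplane arrangement of `n` affine hyperplanes in `ℝ^d`, given by
nonzero normal vectors and offsets: the `i`-th hyperplane is
`{x | ∑ j, normal i j * x j = offset i}`. -/
structure Arrangement (d n : ℕ) where
  normal : Fin n → (Fin d → ℝ)
  offset : Fin n → ℝ
  normal_ne : ∀ i, normal i ≠ 0

/-- The thickening (regular open hull) `T_S` of a set `S` of chambers. -/
def thickening {d : ℕ} (S : Set (Set (Fin d → ℝ))) : Set (Fin d → ℝ) :=
  interior (closure (⋃ C ∈ S, C))

/-- The set of connected components of a subset `X` of a topological space. -/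
def connComps {α : Type*} [TopologicalSpace α] (X : Set α) : Set (Set α) :=
  {c | ∃ x ∈ X, c = connectedComponentIn X x}

namespace Arrangement

variable {d n : ℕ} (𝓗 : Arrangement d n)

/-- The `i`-th hyperplane of the arrangement. -/
def H (i : Fin n) : Set (Fin d → ℝ) := {x | ∑ j, 𝓗.normal i j * x j = 𝓗.offset i}

/-- The positive open half-space determined by the `i`-th hyperplane. -/
def pos (i : Fin n) : Set (Fin d → ℝ) := {x | 𝓗.offset i < ∑ j, 𝓗.normal i j * x j}

/-- The negative open half-space determined by the `i`-th hyperplane. -/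
def neg (i : Fin n) : Set (Fin d → ℝ) := {x | ∑ j, 𝓗.normal i j * x j < 𝓗.offset i}

/-- The complement of the union of the hyperplanes. -/
def free : Set (Fin d → ℝ) := {x | ∀ i, x ∉ 𝓗.H i}

/-- The chambers: connected components of the complement of the hyperplanes. -/
def chambers : Set (Set (Fin d → ℝ)) :=
  {C | ∃ x ∈ 𝓗.free, C = connectedComponentIn 𝓗.free x}

/-- General position: the normals of any `≤ d` hyperplanes are linearly independent
(so that their intersection is an affine subspace of the right dimension), and no
`d+1` hyperplanes have a common point. -/
def GeneralPosition : Prop :=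
  (∀ A : Finset (Fin n), A.card ≤ d →
      LinearIndependent ℝ (fun i : A => 𝓗.normal i.1)) ∧
  (∀ A : Finset (Fin n), A.card = d + 1 → (⋂ i ∈ A, 𝓗.H i) = ∅)

/-- Hyperplane `e` separates `C` from `C'`. -/
def Separates (e : Fin n) (C C' : Set (Fin d → ℝ)) : Prop :=
  (C ⊆ 𝓗.pos e ∧ C' ⊆ 𝓗.neg e) ∨ (C ⊆ 𝓗.neg e ∧ C' ⊆ 𝓗.pos e)

/-- Adjacency in the chamber graph: two chambers are adjacent iff they are separated
by exactly one hyperplane (equivalently, share a common facet). -/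
def Adj (C C' : Set (Fin d → ℝ)) : Prop :=
  C ∈ 𝓗.chambers ∧ C' ∈ 𝓗.chambers ∧ ∃! e : Fin n, 𝓗.Separates e C C'

/-- The edge boundary of a set `S` of chambers, encoded as the set of ordered pairs
`(C, C')` of adjacent chambers with `C ∈ S` and `C' ∉ S` (each boundary edge is thus
counted exactly once). -/
def edgeBoundary (S : Set (Set (Fin d → ℝ))) :
    Set ((Set (Fin d → ℝ)) × (Set (Fin d → ℝ))) :=
  {q | q.1 ∈ S ∧ q.2 ∉ S ∧ 𝓗.Adj q.1 q.2}

/-- The stratum `T_S(A) = T_S ∩ L_A`. -/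
def stratum (S : Set (Set (Fin d → ℝ))) (A : Finset (Fin n)) : Set (Fin d → ℝ) :=
  thickening S ∩ ⋂ i ∈ A, 𝓗.H i

/-- The support of `S`: those `A` with nonempty stratum. -/
def supp (S : Set (Set (Fin d → ℝ))) : Set (Finset (Fin n)) :=
  {A | (𝓗.stratum S A).Nonempty}

/-- `H_f` bounds the stratum `T_S(A)`: the stratum lies entirely in one of the open
half-spaces of `H_f`, and `H_f` meets the closure of the stratum within `L_A`. -/
def Bounds (f : Fin n) (S : Set (Set (Fin d → ℝ))) (A : Finset (Fin n)) : Prop :=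
  (𝓗.stratum S A ⊆ 𝓗.pos f ∨ 𝓗.stratum S A ⊆ 𝓗.neg f) ∧
  (𝓗.H f ∩ closure (𝓗.stratum S A) ∩ ⋂ i ∈ A, 𝓗.H i).Nonempty

/-- `S` is strata-connected if every nonempty stratum is connected. -/
def StrataConnected (S : Set (Set (Fin d → ℝ))) : Prop :=
  ∀ A ∈ 𝓗.supp S, IsConnected (𝓗.stratum S A)

end Arrangement

/-- The generalized binomial coefficient `C(x, i) = x(x-1)⋯(x-i+1)/i!`. -/
noncomputable def gchoose (x : ℝ) (i : ℕ) : ℝ :=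
  (∏ j ∈ Finset.range i, (x - j)) / (Nat.factorial i)

/-!
The support of `S` is a lower set. For every `A` in it, `S` meets all cells whose sign vectors agree
off `A` with a suitable one, so Pajor's inequality for set families, applied to the sign vectors of
the cells that meet `S`, gives `|supp S| ≤ |S|`. Lovász's real form of the Kruskal–Katona theorem
then bounds the number of `d`-sets in `supp S` by `C(k, d)`. If the flat `⋂ i ∈ A, H i` lies in
`T_S`, every `d`-set containing `A` belongs to `supp S`, because the `d` hyperplanes it indexes have
a common point; counting pairs of a contained flat and a `d`-superset finishes the proof.
-/

open scoped Finset FinsetFamily Nat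

section Gchoose

variable {x y : ℝ} {i : ℕ}

lemma gchoose_eq_descPochhammer_div (x : ℝ) (i : ℕ) :
    gchoose x i = (descPochhammer ℝ i).eval x / i ! := by
  rw [gchoose, descPochhammer_eval_eq_prod_range]

@[simp] lemma gchoose_zero (x : ℝ) : gchoose x 0 = 1 := by simp [gchoose]

@[simp] lemma gchoose_one (x : ℝ) : gchoose x 1 = x := by simp [gchoose]

lemma gchoose_two (x : ℝ) : gchoose x 2 = x * (x - 1) / 2 := by
  simp [gchoose, Finset.prod_range_succ]

lemma gchoose_three (x : ℝ) : gchoose x 3 = x * (x - 1) * (x - 2) / 6 := by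
  simp [gchoose, Finset.prod_range_succ, Nat.factorial]

lemma add_one_mul_gchoose_add_one (x : ℝ) (i : ℕ) :
    (i + 1) * gchoose x (i + 1) = gchoose x i * (x - i) := by
  rw [gchoose, gchoose, Finset.prod_range_succ, Nat.factorial_succ]
  push_cast
  field_simp

lemma add_one_mul_gchoose_add_one' (x : ℝ) (i : ℕ) :
    (i + 1) * gchoose x (i + 1) = x * gchoose (x - 1) i := by
  have shift : ∀ j : ℕ, x - (j + 1 : ℕ) = x - 1 - j := fun j => by push_cast; ring
  rw [gchoose, gchoose, Finset.prod_range_succ', Nat.factorial_succ]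
  simp only [shift]
  push_cast
  field_simp
  ring

lemma gchoose_nonneg (hx : (i : ℝ) - 1 ≤ x) : 0 ≤ gchoose x i := by
  rw [gchoose_eq_descPochhammer_div]
  exact div_nonneg (descPochhammer_nonneg hx) (Nat.cast_nonneg _)

lemma gchoose_pos (hx : (i : ℝ) - 1 < x) : 0 < gchoose x i := by
  rw [gchoose_eq_descPochhammer_div]
  exact div_pos (descPochhammer_pos hx) (Nat.cast_pos.2 i.factorial_pos)

lemma gchoose_self (i : ℕ) : gchoose i i = 1 := by
  rw [gchoose_eq_descPochhammer_div, descPochhammer_eval_eq_descFactorial, Nat.descFactorial_self,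
    div_self (Nat.cast_ne_zero.2 i.factorial_ne_zero)]

lemma gchoose_le_gchoose (hx : (i : ℝ) - 1 ≤ x) (hxy : x ≤ y) : gchoose x i ≤ gchoose y i := by
  simp only [gchoose_eq_descPochhammer_div]
  gcongr
  exact monotoneOn_descPochhammer_eval i hx (hx.trans hxy) hxy

lemma sum_gchoose_pos (hx : (i : ℝ) - 1 ≤ x) :
    0 < ∑ j ∈ Finset.range (i + 1), gchoose x j := by
  rw [Finset.sum_range_succ']
  refine add_pos_of_nonneg_of_pos (Finset.sum_nonneg fun j hj => gchoose_nonneg ?_) (by simp)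
  have : ((j + 1 : ℕ) : ℝ) ≤ i := Nat.cast_le.2 (Finset.mem_range.1 hj)
  linarith

lemma gchoose_succ_lt_gchoose_succ (hx : (i : ℝ) ≤ x) (hxy : x < y) :
    gchoose x (i + 1) < gchoose y (i + 1) := by
  refine lt_of_mul_lt_mul_left ?_ (by positivity : (0 : ℝ) ≤ i + 1)
  rw [add_one_mul_gchoose_add_one, add_one_mul_gchoose_add_one]
  calc gchoose x i * (x - i) ≤ gchoose y i * (x - i) :=
        mul_le_mul_of_nonneg_right (gchoose_le_gchoose (by linarith) hxy.le) (by linarith)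
    _ < gchoose y i * (y - i) :=
        mul_lt_mul_of_pos_left (by linarith) (gchoose_pos (by linarith))

lemma exists_le_gchoose_eq (hi : i ≠ 0) (hy : 1 ≤ y) : ∃ x : ℝ, i ≤ x ∧ gchoose x i = y := by
  have hfac : (1 : ℝ) ≤ i ! := Nat.one_le_cast.2 i.factorial_pos
  have hb : 1 ≤ y * i ! := one_le_mul_of_one_le_of_one_le hy hfac
  have hcont : Continuous fun x => gchoose x i := by
    simp only [gchoose_eq_descPochhammer_div]
    exact continuous_descPochhammer_eval.div_const _
  have hlarge : y ≤ gchoose (i - 1 + y * i !) i := by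
    rw [gchoose_eq_descPochhammer_div, le_div_iff₀ (by positivity)]
    calc y * i ! ≤ (y * i !) ^ i := le_self_pow₀ hb hi
      _ = (i - 1 + y * (i !) - i + 1) ^ i := by ring
      _ ≤ _ := pow_le_descPochhammer_eval (by linarith)
  obtain ⟨x, hx, rfl⟩ := intermediate_value_Icc (by linarith) hcont.continuousOn
    ⟨(gchoose_self i).trans_le hy, hlarge⟩
  exact ⟨x, hx.1, rfl⟩

end Gchoose

section KruskalKatona

variable {α : Type*} [DecidableEq α] {𝒯 : Finset (Finset α)} {r : ℕ} {x : ℝ}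

lemma card_memberSubfamily (𝒜 : Finset (Finset α)) (a : α) :
    #(𝒜.memberSubfamily a) = #{s ∈ 𝒜 | a ∈ s} := by
  rw [← Finset.image_insert_memberSubfamily, Finset.card_image_of_injOn]
  exact fun s hs t ht h => by
    rw [← Finset.erase_insert (Finset.mem_memberSubfamily.1 hs).2, h,
      Finset.erase_insert (Finset.mem_memberSubfamily.1 ht).2]

lemma sum_card_memberSubfamily {𝒜 : Finset (Finset α)} {s : Finset α} (hs : ∀ t ∈ 𝒜, t ⊆ s) :
    ∑ a ∈ s, #(𝒜.memberSubfamily a) = ∑ t ∈ 𝒜, #t := by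
  simp only [card_memberSubfamily]
  refine (Finset.sum_card_bipartiteAbove_eq_sum_card_bipartiteBelow (· ∈ ·)).trans
    (Finset.sum_congr rfl fun t ht => ?_)
  rw [Finset.bipartiteBelow, Finset.filter_mem_eq_inter, Finset.inter_eq_right.2 (hs t ht)]

lemma sized_memberSubfamily {𝒜 : Finset (Finset α)} (h𝒜 : (𝒜 : Set (Finset α)).Sized (r + 1))
    (a : α) : (𝒜.memberSubfamily a : Set (Finset α)).Sized r := by
  intro s hs
  obtain ⟨hins, has⟩ := Finset.mem_memberSubfamily.1 hs
  have := h𝒜 hins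
  rw [Finset.card_insert_of_notMem has] at this
  exact Nat.succ_injective this

lemma shadow_memberSubfamily_subset (𝒜 : Finset (Finset α)) (a : α) :
    ∂ (𝒜.memberSubfamily a) ⊆ (∂ 𝒜).memberSubfamily a := by
  intro t ht
  obtain ⟨s, hs, b, hb, rfl⟩ := Finset.mem_shadow_iff.1 ht
  obtain ⟨hins, has⟩ := Finset.mem_memberSubfamily.1 hs
  have hab : a ≠ b := fun h => has (h ▸ hb)
  rw [Finset.mem_memberSubfamily, ← Finset.erase_insert_of_ne hab]
  exact ⟨Finset.erase_mem_shadow hins (Finset.mem_insert_of_mem hb),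
    fun h => has (Finset.mem_of_mem_erase h)⟩

lemma memberSubfamily_subset_nonMemberSubfamily_shadow (𝒜 : Finset (Finset α)) (a : α) :
    𝒜.memberSubfamily a ⊆ (∂ 𝒜).nonMemberSubfamily a := by
  intro s hs
  obtain ⟨hins, has⟩ := Finset.mem_memberSubfamily.1 hs
  exact Finset.mem_nonMemberSubfamily.2
    ⟨Finset.mem_shadow_iff_insert_mem.2 ⟨a, has, hins⟩, has⟩

lemma shadow_nonempty (h𝒯 : (𝒯 : Set (Finset α)).Sized (r + 1)) (hne : 𝒯.Nonempty) :
    (∂ 𝒯).Nonempty := by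
  obtain ⟨s, hs⟩ := hne
  obtain ⟨a, ha⟩ : s.Nonempty := Finset.card_pos.1 (by rw [h𝒯 hs]; exact r.succ_pos)
  exact ⟨_, Finset.erase_mem_shadow hs ha⟩

-- Either `a` has large degree in the shadow, and the members of `𝒯` through `a` are bounded by the
-- members of the shadow avoiding `a`; or its degree is small, and the link of `a` is bounded by
-- induction.
lemma mul_card_memberSubfamily_le (h𝒯 : (𝒯 : Set (Finset α)).Sized (r + 2))
    (hx : (r + 1 : ℝ) ≤ x) (hcard : (#(∂ 𝒯) : ℝ) ≤ gchoose x (r + 1)) (a : α)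
    (hlink : r ≠ 0 → ∀ y : ℝ, r ≤ y → (#(∂ (𝒯.memberSubfamily a)) : ℝ) ≤ gchoose y r →
      (#(𝒯.memberSubfamily a) : ℝ) ≤ gchoose y (r + 1)) :
    (r + 1) * (#(𝒯.memberSubfamily a) : ℝ) ≤ (x - (r + 1)) * #((∂ 𝒯).memberSubfamily a) := by
  obtain hempty | hne := (𝒯.memberSubfamily a).eq_empty_or_nonempty
  · rw [hempty, Finset.card_empty, Nat.cast_zero, mul_zero]
    exact mul_nonneg (by linarith) (Nat.cast_nonneg _)
  have hshadow : (#(∂ (𝒯.memberSubfamily a)) : ℝ) ≤ #((∂ 𝒯).memberSubfamily a) :=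
    Nat.cast_le.2 (Finset.card_le_card (shadow_memberSubfamily_subset 𝒯 a))
  have hdeg : (1 : ℝ) ≤ #((∂ 𝒯).memberSubfamily a) :=
    (Nat.one_le_cast.2 (shadow_nonempty (sized_memberSubfamily h𝒯 a) hne).card_pos).trans hshadow
  obtain hlarge | hsmall := le_or_gt (gchoose (x - 1) r) #((∂ 𝒯).memberSubfamily a)
  · have havoid : (#(𝒯.memberSubfamily a) : ℝ) + #((∂ 𝒯).memberSubfamily a) ≤ #(∂ 𝒯) := by
      rw [← Finset.card_memberSubfamily_add_card_nonMemberSubfamily a (∂ 𝒯), add_comm]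
      exact_mod_cast Nat.add_le_add_left
        (Finset.card_le_card (memberSubfamily_subset_nonMemberSubfamily_shadow 𝒯 a)) _
    have htotal : (r + 1) * (#(∂ 𝒯) : ℝ) ≤ x * #((∂ 𝒯).memberSubfamily a) :=
      calc (r + 1) * (#(∂ 𝒯) : ℝ) ≤ (r + 1) * gchoose x (r + 1) := by gcongr
        _ = x * gchoose (x - 1) r := add_one_mul_gchoose_add_one' x r
        _ ≤ x * #((∂ 𝒯).memberSubfamily a) := by gcongr; linarith [r.cast_nonneg (α := ℝ)]
    nlinarith
  · have hr : r ≠ 0 := by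
      rintro rfl
      rw [gchoose_zero] at hsmall
      exact hsmall.not_ge hdeg
    obtain ⟨y, hry, hy⟩ := exists_le_gchoose_eq hr hdeg
    have hyx : y < x - 1 := by
      by_contra! h
      exact (gchoose_le_gchoose (by linarith) h).not_gt (hy ▸ hsmall)
    calc (r + 1) * (#(𝒯.memberSubfamily a) : ℝ) ≤ (r + 1) * gchoose y (r + 1) := by
          gcongr
          exact hlink hr y hry (hshadow.trans_eq hy.symm)
      _ = #((∂ 𝒯).memberSubfamily a) * (y - r) := by rw [add_one_mul_gchoose_add_one, hy]
      _ ≤ #((∂ 𝒯).memberSubfamily a) * (x - (r + 1)) :=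
        mul_le_mul_of_nonneg_left (by linarith) (Nat.cast_nonneg _)
      _ = (x - (r + 1)) * #((∂ 𝒯).memberSubfamily a) := mul_comm _ _

lemma mul_card_le_mul_card_shadow (h𝒯 : (𝒯 : Set (Finset α)).Sized (r + 2)) (c : ℝ)
    (h : ∀ a, (r + 1) * (#(𝒯.memberSubfamily a) : ℝ) ≤ c * #((∂ 𝒯).memberSubfamily a)) :
    (r + 2) * (#𝒯 : ℝ) ≤ c * #(∂ 𝒯) := by
  let ground := 𝒯.biUnion id
  have hsub : ∀ t ∈ 𝒯, t ⊆ ground := fun t ht => Finset.subset_biUnion_of_mem id ht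
  have hsub' : ∀ t ∈ ∂ 𝒯, t ⊆ ground := fun t ht =>
    let ⟨s, hs, hts⟩ := Finset.exists_subset_of_mem_shadow ht
    hts.trans (hsub s hs)
  have h𝒯sum : ∑ a ∈ ground, (#(𝒯.memberSubfamily a) : ℝ) = #𝒯 * (r + 2) := by
    exact_mod_cast (sum_card_memberSubfamily hsub).trans (Finset.sum_const_nat fun _ ht => h𝒯 ht)
  have hshadowsum : ∑ a ∈ ground, (#((∂ 𝒯).memberSubfamily a) : ℝ) = #(∂ 𝒯) * (r + 1) := by
    exact_mod_cast (sum_card_memberSubfamily hsub').trans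
      (Finset.sum_const_nat fun _ ht => h𝒯.shadow ht)
  have hsum := Finset.sum_le_sum fun a (_ : a ∈ ground) => h a
  rw [← Finset.mul_sum, ← Finset.mul_sum, h𝒯sum, hshadowsum] at hsum
  refine le_of_mul_le_mul_left ?_ (by positivity : (0 : ℝ) < r + 1)
  linarith

lemma card_le_gchoose_of_forall_mul_card_memberSubfamily_le
    (h𝒯 : (𝒯 : Set (Finset α)).Sized (r + 2)) (hx : (r + 1 : ℝ) ≤ x)
    (hcard : (#(∂ 𝒯) : ℝ) ≤ gchoose x (r + 1))
    (h : ∀ a, (r + 1) * (#(𝒯.memberSubfamily a) : ℝ) ≤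
      (x - (r + 1)) * #((∂ 𝒯).memberSubfamily a)) :
    (#𝒯 : ℝ) ≤ gchoose x (r + 2) := by
  refine le_of_mul_le_mul_left ?_ (by positivity : (0 : ℝ) < r + 2)
  calc (r + 2) * (#𝒯 : ℝ) ≤ (x - (r + 1)) * #(∂ 𝒯) := mul_card_le_mul_card_shadow h𝒯 _ h
    _ ≤ (x - (r + 1)) * gchoose x (r + 1) := mul_le_mul_of_nonneg_left hcard (by linarith)
    _ = (r + 2) * gchoose x (r + 2) := by
      have := add_one_mul_gchoose_add_one x (r + 1)
      push_cast at this
      linarith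

theorem card_le_gchoose_of_card_shadow_le (h𝒯 : (𝒯 : Set (Finset α)).Sized (r + 2))
    (hx : (r + 1 : ℝ) ≤ x) (hcard : (#(∂ 𝒯) : ℝ) ≤ gchoose x (r + 1)) :
    (#𝒯 : ℝ) ≤ gchoose x (r + 2) := by
  refine card_le_gchoose_of_forall_mul_card_memberSubfamily_le h𝒯 hx hcard fun a =>
    mul_card_memberSubfamily_le h𝒯 hx hcard a fun hr y hy hlink => ?_
  induction r generalizing 𝒯 x y a with
  | zero => exact absurd rfl hr
  | succ r ih =>
    push_cast at hy
    have hsized := sized_memberSubfamily h𝒯 a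
    exact card_le_gchoose_of_forall_mul_card_memberSubfamily_le hsized hy hlink fun b =>
      mul_card_memberSubfamily_le hsized hy hlink b fun hr z hz hzlink =>
        ih hsized hy hlink b hr z hz hzlink

theorem gchoose_le_card_shadow (h𝒯 : (𝒯 : Set (Finset α)).Sized (r + 1)) (hx : (r + 1 : ℝ) ≤ x)
    (hcard : gchoose x (r + 1) ≤ #𝒯) : gchoose x r ≤ #(∂ 𝒯) := by
  have hne : 𝒯.Nonempty := by
    rw [← Finset.card_pos, ← Nat.cast_pos (α := ℝ)]
    exact (gchoose_pos (by push_cast; linarith)).trans_le hcard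
  have hone : (1 : ℝ) ≤ #(∂ 𝒯) := Nat.one_le_cast.2 (shadow_nonempty h𝒯 hne).card_pos
  cases r with
  | zero => rwa [gchoose_zero]
  | succ r =>
    by_contra! hlt
    obtain ⟨y, hry, hy⟩ := exists_le_gchoose_eq r.succ_ne_zero hone
    push_cast at hx hry
    have hyx : y < x := by
      by_contra! h
      exact (gchoose_le_gchoose (by push_cast; linarith) h).not_gt (hy ▸ hlt)
    refine hcard.not_gt ?_
    calc (#𝒯 : ℝ) ≤ gchoose y (r + 2) := card_le_gchoose_of_card_shadow_le h𝒯 hry hy.ge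
      _ < gchoose x (r + 2) := gchoose_succ_lt_gchoose_succ (by push_cast; exact hry) hyx

end KruskalKatona

section LowerSet

variable {α : Type*} {F : Finset (Finset α)} {d : ℕ} {k x : ℝ}

lemma shadow_slice_succ_subset [DecidableEq α] (hF : IsLowerSet (F : Set (Finset α))) (r : ℕ) :
    ∂ (F.slice (r + 1)) ⊆ F.slice r := by
  intro t ht
  obtain ⟨s, hs, hts⟩ := Finset.exists_subset_of_mem_shadow ht
  exact Finset.mem_slice.2
    ⟨hF hts (Finset.mem_slice.1 hs).1, (Finset.sized_slice (𝒜 := F)).shadow ht⟩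

lemma gchoose_le_card_slice (hF : IsLowerSet (F : Set (Finset α))) (hx : (d : ℝ) ≤ x)
    (hcard : gchoose x d ≤ #(F.slice d)) {i : ℕ} (hi : i ≤ d) : gchoose x i ≤ #(F.slice i) := by
  classical
  induction hi using Nat.decreasingInduction with
  | self => exact hcard
  | of_succ i hi ih =>
    have hix : (i + 1 : ℝ) ≤ x := le_trans (by exact_mod_cast hi) hx
    exact (gchoose_le_card_shadow Finset.sized_slice hix ih).trans
      (Nat.cast_le.2 (Finset.card_le_card (shadow_slice_succ_subset hF i)))

lemma sum_card_slice_le (F : Finset (Finset α)) (s : Finset ℕ) : ∑ i ∈ s, #(F.slice i) ≤ #F := by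
  classical
  rw [← Finset.card_biUnion fun i _ j _ => Finset.pairwiseDisjoint_slice trivial trivial]
  exact Finset.card_le_card (Finset.biUnion_subset.2 fun _ _ => Finset.slice_subset)

theorem card_slice_le_gchoose (hF : IsLowerSet (F : Set (Finset α))) (hk : (d : ℝ) - 1 ≤ k)
    (hcard : (#F : ℝ) ≤ ∑ i ∈ Finset.range (d + 1), gchoose k i) :
    (#(F.slice d) : ℝ) ≤ gchoose k d := by
  by_contra! hlt
  have hpos : (1 : ℝ) ≤ #(F.slice d) := by
    exact_mod_cast Nat.cast_pos.1 ((gchoose_nonneg hk).trans_lt hlt)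
  obtain rfl | hd := eq_or_ne d 0
  · rw [gchoose_zero, Nat.one_lt_cast, Finset.one_lt_card_iff] at hlt
    obtain ⟨s, t, hs, ht, hne⟩ := hlt
    exact hne (Finset.sized_slice.subsingleton hs ht)
  obtain ⟨x, hdx, hx⟩ := exists_le_gchoose_eq hd hpos
  have hkx : k < x := by
    by_contra! h
    exact (gchoose_le_gchoose (by linarith) h).not_gt (hx ▸ hlt)
  refine hcard.not_gt ?_
  calc ∑ i ∈ Finset.range (d + 1), gchoose k i < ∑ i ∈ Finset.range (d + 1), gchoose x i := by
        refine Finset.sum_lt_sum (fun i hi => gchoose_le_gchoose ?_ hkx.le)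
          ⟨d, Finset.self_mem_range_succ d, hx ▸ hlt⟩
        have : (i : ℝ) ≤ d := Nat.cast_le.2 (Finset.mem_range_succ_iff.1 hi)
        linarith
    _ ≤ ∑ i ∈ Finset.range (d + 1), (#(F.slice i) : ℝ) := Finset.sum_le_sum fun i hi =>
        gchoose_le_card_slice hF hdx hx.le (Finset.mem_range_succ_iff.1 hi)
    _ ≤ #F := by exact_mod_cast sum_card_slice_le F _

end LowerSet

section SetFamilies

variable {α : Type*}

-- The complement of such an `A` is not shattered by `𝒜ᶜ`, so this is Pajor's inequality for `𝒜ᶜ`.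
theorem card_le_card_of_forall_exists_cube [DecidableEq α] [Finite α] {F 𝒜 : Finset (Finset α)}
    (h : ∀ A ∈ F, ∃ t, ∀ U, U \ A = t \ A → U ∈ 𝒜) : #F ≤ #𝒜 := by
  have := Fintype.ofFinite α
  have hdisj : Disjoint (F.image compl) (𝒜ᶜ).shatterer := by
    rw [Finset.disjoint_left]
    intro _ hA hshatters
    obtain ⟨A, hAF, rfl⟩ := Finset.mem_image.1 hA
    obtain ⟨t, ht⟩ := h A hAF
    obtain ⟨U, hU, hUt⟩ := Finset.mem_shatterer.1 hshatters (Finset.inter_subset_left (s₂ := t))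
    refine Finset.mem_compl.1 hU (ht U ?_)
    rw [Finset.sdiff_eq_inter_compl, Finset.inter_comm, hUt, Finset.inter_comm,
      Finset.sdiff_eq_inter_compl]
  have hunion := Finset.card_le_univ (F.image compl ∪ (𝒜ᶜ).shatterer)
  rw [Finset.card_union_of_disjoint hdisj, Finset.card_image_of_injective _ compl_injective]
    at hunion
  have hpajor := (𝒜ᶜ).card_le_card_shatterer
  have := Finset.card_compl_add_card 𝒜
  omega

lemma card_supersets_eq_choose [DecidableEq α] [Fintype α] {d : ℕ} (A : Finset α) (hA : #A ≤ d) :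
    #{B : Finset α | A ⊆ B ∧ #B = d} = (Fintype.card α - #A).choose (d - #A) := by
  rw [← Finset.card_compl, ← Finset.card_powersetCard]
  refine Finset.card_nbij' (· \ A) (· ∪ A) (fun B hB => ?_) (fun C hC => ?_) (fun B hB => ?_)
    fun C hC => ?_
  · obtain ⟨hAB, hBd⟩ := (Finset.mem_filter.1 hB).2
    refine Finset.mem_powersetCard.2 ⟨fun b hb => ?_, ?_⟩
    · exact Finset.mem_compl.2 (Finset.mem_sdiff.1 hb).2
    · rw [Finset.card_sdiff_of_subset hAB, hBd]
  · obtain ⟨hCA, hCd⟩ := Finset.mem_powersetCard.1 hC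
    have hdisj : Disjoint C A := Finset.subset_compl_iff_disjoint_right.1 hCA
    refine Finset.mem_filter.2 ⟨Finset.mem_univ _, Finset.subset_union_right, ?_⟩
    rw [Finset.card_union_of_disjoint hdisj, hCd, Nat.sub_add_cancel hA]
  · exact Finset.sdiff_union_of_subset (Finset.mem_filter.1 hB).2.1
  · exact Finset.union_sdiff_cancel_right
      (Finset.subset_compl_iff_disjoint_right.1 (Finset.mem_powersetCard.1 hC).1)

theorem card_mul_choose_le_card_mul_choose [Fintype α] {j d : ℕ} {P T : Finset (Finset α)}
    (hP : (P : Set (Finset α)).Sized j) (hT : (T : Set (Finset α)).Sized d) (hjd : j ≤ d)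
    (h : ∀ A ∈ P, ∀ B, A ⊆ B → #B = d → B ∈ T) :
    #P * (Fintype.card α - j).choose (d - j) ≤ #T * d.choose j := by
  classical
  refine Finset.card_mul_le_card_mul (· ⊆ ·) (fun A hA => ?_) fun B hB => ?_
  · rw [← hP hA, ← card_supersets_eq_choose A ((hP hA).trans_le hjd)]
    refine Finset.card_le_card fun B hB => ?_
    obtain ⟨hAB, hBd⟩ := (Finset.mem_filter.1 hB).2
    exact (Finset.mem_bipartiteAbove _).2 ⟨h A hA B hAB hBd, hAB⟩
  · rw [← hT hB, ← Finset.card_powersetCard]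
    refine Finset.card_le_card fun A hA => ?_
    obtain ⟨hAP, hAB⟩ := (Finset.mem_bipartiteBelow _).1 hA
    exact Finset.mem_powersetCard.2 ⟨hAB, hP hAP⟩

end SetFamilies

namespace Arrangement

variable {d n : ℕ} {𝓗 : Arrangement d n} {S : Set (Set (Fin d → ℝ))} {A U V : Finset (Fin n)}
  {C : Set (Fin d → ℝ)} {p : Fin d → ℝ} {i : Fin n}

lemma GeneralPosition.card_le (hgp : 𝓗.GeneralPosition) (hp : ∀ i ∈ A, p ∈ 𝓗.H i) : #A ≤ d := by
  by_contra! hA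
  obtain ⟨B, hBA, hB⟩ := Finset.exists_subset_card_eq (Nat.succ_le_of_lt hA)
  exact (hgp.2 B hB).subset (mem_iInter₂.2 fun i hi => hp i (hBA hi))

lemma GeneralPosition.exists_dotProduct_eq (hgp : 𝓗.GeneralPosition) (hA : #A ≤ d)
    (v : Fin n → ℝ) : ∃ u, ∀ i ∈ A, 𝓗.normal i ⬝ᵥ u = v i := by
  let M : Matrix A (Fin d) ℝ := fun i => 𝓗.normal i
  have hrank : M.rank = Fintype.card A := LinearIndependent.rank_matrix (hgp.1 A hA)
  have hsurj : Function.Surjective M.mulVecLin := by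
    rw [← LinearMap.range_eq_top]
    apply Submodule.eq_top_of_finrank_eq
    rwa [Module.finrank_fintype_fun_eq_card]
  obtain ⟨u, hu⟩ := hsurj fun i => v i
  exact ⟨u, fun i hi => congrFun hu ⟨i, hi⟩⟩

variable (𝓗) in
/-- The open half-space bounded by the `i`-th hyperplane that the sign vector `U` selects.
Sign vectors are encoded by the set of indices of their positive entries. -/
def side (U : Finset (Fin n)) (i : Fin n) : Set (Fin d → ℝ) :=
  if i ∈ U then 𝓗.pos i else 𝓗.neg i

variable (𝓗) in
/-- The open cell of points with sign vector `U`; in contrast to a chamber it may be empty. -/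
def cell (U : Finset (Fin n)) : Set (Fin d → ℝ) := ⋂ i, 𝓗.side U i

lemma side_of_mem (hi : i ∈ U) : 𝓗.side U i = 𝓗.pos i := if_pos hi

lemma side_of_notMem (hi : i ∉ U) : 𝓗.side U i = 𝓗.neg i := if_neg hi

lemma isOpen_pos (𝓗 : Arrangement d n) (i : Fin n) : IsOpen (𝓗.pos i) :=
  isOpen_lt continuous_const (by fun_prop)

lemma isOpen_neg (𝓗 : Arrangement d n) (i : Fin n) : IsOpen (𝓗.neg i) :=
  isOpen_lt (by fun_prop) continuous_const

lemma disjoint_pos_neg (𝓗 : Arrangement d n) (i : Fin n) : Disjoint (𝓗.pos i) (𝓗.neg i) :=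
  disjoint_left.2 fun _ hpos hneg => lt_asymm (mem_ofPred_eq.mp hpos) hneg

lemma free_subset_pos_union_neg (𝓗 : Arrangement d n) (i : Fin n) :
    𝓗.free ⊆ 𝓗.pos i ∪ 𝓗.neg i :=
  fun _ hx => (lt_or_gt_of_ne (hx i)).symm

lemma isOpen_side (𝓗 : Arrangement d n) (U : Finset (Fin n)) (i : Fin n) :
    IsOpen (𝓗.side U i) := by
  unfold side
  split_ifs
  exacts [𝓗.isOpen_pos i, 𝓗.isOpen_neg i]

lemma isOpen_cell (𝓗 : Arrangement d n) (U : Finset (Fin n)) : IsOpen (𝓗.cell U) :=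
  isOpen_iInter_of_finite (𝓗.isOpen_side U)

lemma subset_of_mem_cell (hU : p ∈ 𝓗.cell U) (hV : p ∈ 𝓗.cell V) : U ⊆ V := by
  intro i hi
  by_contra hiV
  have hpos := side_of_mem hi ▸ mem_iInter.1 hU i
  have hneg := side_of_notMem hiV ▸ mem_iInter.1 hV i
  exact disjoint_left.1 (𝓗.disjoint_pos_neg i) hpos hneg

lemma eq_of_mem_cell (hU : p ∈ 𝓗.cell U) (hV : p ∈ 𝓗.cell V) : U = V :=
  (subset_of_mem_cell hU hV).antisymm (subset_of_mem_cell hV hU)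

lemma subset_cell_of_mem_chambers (hC : C ∈ 𝓗.chambers) (hCU : (C ∩ 𝓗.cell U).Nonempty) :
    C ⊆ 𝓗.cell U := by
  obtain ⟨x, _, rfl⟩ := hC
  refine subset_iInter fun i => ?_
  have hside : (connectedComponentIn 𝓗.free x ∩ 𝓗.side U i).Nonempty :=
    hCU.mono (inter_subset_inter_right _ (iInter_subset _ i))
  have hsub := (connectedComponentIn_subset 𝓗.free x).trans (𝓗.free_subset_pos_union_neg i)
  have hconn := isPreconnected_connectedComponentIn (x := x) (F := 𝓗.free)
  by_cases hi : i ∈ U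
  · rw [side_of_mem hi] at hside ⊢
    exact hconn.subset_left_of_subset_union (𝓗.isOpen_pos i) (𝓗.isOpen_neg i)
      (𝓗.disjoint_pos_neg i) hsub hside
  · rw [side_of_notMem hi] at hside ⊢
    exact hconn.subset_right_of_subset_union (𝓗.isOpen_pos i) (𝓗.isOpen_neg i)
      (𝓗.disjoint_pos_neg i) hsub hside

lemma ncard_cells_meeting_le (hS : S ⊆ 𝓗.chambers) (hfin : S.Finite) :
    {U | (𝓗.cell U ∩ ⋃ C ∈ S, C).Nonempty}.ncard ≤ S.ncard := by
  have hmeets : ∀ U ∈ {U | (𝓗.cell U ∩ ⋃ C ∈ S, C).Nonempty},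
      ∃ C ∈ S, (C ∩ 𝓗.cell U).Nonempty := fun U ⟨x, hxU, hxS⟩ =>
    let ⟨C, hC, hxC⟩ := mem_iUnion₂.1 hxS
    ⟨C, hC, x, hxC, hxU⟩
  choose! chamber hchamber hinter using hmeets
  refine ncard_le_ncard_of_injOn chamber hchamber (fun U hU V hV hUV => ?_) hfin
  obtain ⟨x, hxC, hxU⟩ := hinter U hU
  refine eq_of_mem_cell hxU (subset_cell_of_mem_chambers (hS (hchamber V hV)) (hinter V hV) ?_)
  rwa [← hUV]

lemma add_smul_mem_side {u : Fin d → ℝ} {ε : ℝ} (hp : p ∈ 𝓗.H i)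
    (hu : 𝓗.normal i ⬝ᵥ u = if i ∈ U then 1 else -1) (hε : 0 < ε) :
    p + ε • u ∈ 𝓗.side U i := by
  have hval : 𝓗.normal i ⬝ᵥ (p + ε • u) = 𝓗.offset i + ε * if i ∈ U then 1 else -1 := by
    rw [dotProduct_add, dotProduct_smul, hu, smul_eq_mul]
    exact congrArg (· + _) hp
  by_cases hi : i ∈ U
  · rw [if_pos hi] at hval
    rw [side_of_mem hi]
    exact (by linarith : 𝓗.offset i < 𝓗.normal i ⬝ᵥ (p + ε • u))
  · rw [if_neg hi] at hval
    rw [side_of_notMem hi]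
    exact (by linarith : 𝓗.normal i ⬝ᵥ (p + ε • u) < 𝓗.offset i)

lemma GeneralPosition.mem_closure_cell (hgp : 𝓗.GeneralPosition)
    (hp : ∀ i, p ∉ 𝓗.H i → p ∈ 𝓗.side U i) : p ∈ closure (𝓗.cell U) := by
  classical
  let through : Finset (Fin n) := {i | p ∈ 𝓗.H i}
  have hthrough : #through ≤ d := hgp.card_le fun i hi => (Finset.mem_filter.1 hi).2
  obtain ⟨u, hu⟩ := hgp.exists_dotProduct_eq hthrough fun i => if i ∈ U then 1 else -1
  have hlim : Filter.Tendsto (fun ε : ℝ => p + ε • u) (𝓝[>] 0) (𝓝 p) := by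
    have hcont : Continuous fun ε : ℝ => p + ε • u := by fun_prop
    exact (hcont.tendsto' 0 p (by simp)).mono_left nhdsWithin_le_nhds
  refine mem_closure_of_tendsto hlim ?_
  simp only [cell, mem_iInter, Filter.eventually_all]
  intro i
  by_cases hi : p ∈ 𝓗.H i
  · filter_upwards [self_mem_nhdsWithin] with ε hε
    exact add_smul_mem_side hi (hu i (Finset.mem_filter.2 ⟨Finset.mem_univ i, hi⟩)) hε
  · exact hlim ((𝓗.isOpen_side U i).mem_nhds (hp i hi))

lemma GeneralPosition.cell_inter_nonempty (hgp : 𝓗.GeneralPosition) (hpS : p ∈ thickening S)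
    (hp : ∀ i, p ∉ 𝓗.H i → p ∈ 𝓗.side U i) : (𝓗.cell U ∩ ⋃ C ∈ S, C).Nonempty := by
  obtain ⟨q, hqS, hqU⟩ := mem_closure_iff.1 (hgp.mem_closure_cell hp) _ isOpen_interior hpS
  exact mem_closure_iff.1 (interior_subset hqS) _ (𝓗.isOpen_cell U) hqU

lemma GeneralPosition.exists_forall_cell_inter_nonempty (hgp : 𝓗.GeneralPosition)
    (hA : A ∈ 𝓗.supp S) :
    ∃ t : Finset (Fin n), ∀ U, U \ A = t \ A → (𝓗.cell U ∩ ⋃ C ∈ S, C).Nonempty := by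
  classical
  obtain ⟨p, hpS, hpA⟩ := hA
  refine ⟨({i | p ∈ 𝓗.pos i} : Finset (Fin n)), fun U hU => hgp.cell_inter_nonempty hpS ?_⟩
  intro i hi
  have hiA : i ∉ A := fun h => hi (mem_iInter₂.1 hpA i h)
  have hiU : i ∈ U ↔ p ∈ 𝓗.pos i := by simpa [hiA] using Finset.ext_iff.1 hU i
  by_cases hpos : p ∈ 𝓗.pos i
  · rwa [side_of_mem (hiU.2 hpos)]
  · rw [side_of_notMem (mt hiU.1 hpos)]
    exact lt_of_le_of_ne (not_lt.1 hpos) hi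

theorem GeneralPosition.ncard_supp_le (hgp : 𝓗.GeneralPosition) (hS : S ⊆ 𝓗.chambers)
    (hfin : S.Finite) : (𝓗.supp S).ncard ≤ S.ncard := by
  classical
  refine le_trans ?_ (ncard_cells_meeting_le hS hfin)
  rw [ncard_eq_toFinset_card', ncard_eq_toFinset_card']
  refine card_le_card_of_forall_exists_cube fun A hA => ?_
  obtain ⟨t, ht⟩ := hgp.exists_forall_cell_inter_nonempty (mem_toFinset.1 hA)
  exact ⟨t, fun U hU => mem_toFinset.2 (ht U hU)⟩

lemma isLowerSet_supp (𝓗 : Arrangement d n) (S : Set (Set (Fin d → ℝ))) :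
    IsLowerSet (𝓗.supp S) :=
  fun _ _ hBA => Nonempty.mono <| inter_subset_inter_right _ <|
    biInter_subset_biInter_left hBA

lemma GeneralPosition.mem_supp_of_subset {B : Finset (Fin n)} (hgp : 𝓗.GeneralPosition)
    (hA : ⋂ i ∈ A, 𝓗.H i ⊆ thickening S) (hAB : A ⊆ B) (hB : #B ≤ d) : B ∈ 𝓗.supp S := by
  obtain ⟨p, hp⟩ := hgp.exists_dotProduct_eq hB 𝓗.offset
  exact ⟨p, hA (mem_iInter₂.2 fun i hi => hp i (hAB hi)), mem_iInter₂.2 hp⟩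

theorem GeneralPosition.ncard_flats_mul_choose_le (hgp : 𝓗.GeneralPosition)
    (hS : S ⊆ 𝓗.chambers) (hfin : S.Finite) {k : ℝ} (hk : (d : ℝ) - 1 ≤ k)
    (hcard : (S.ncard : ℝ) ≤ ∑ i ∈ Finset.range (d + 1), gchoose k i) {j : ℕ} (hj : j ≤ d) :
    ({A : Finset (Fin n) | #A = j ∧ ⋂ i ∈ A, 𝓗.H i ⊆ thickening S}.ncard : ℝ) *
      (n - j).choose (d - j) ≤ gchoose k d * d.choose j := by
  classical
  let F := (𝓗.supp S).toFinset
  have hF : IsLowerSet (F : Set (Finset (Fin n))) := by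
    rw [coe_toFinset]
    exact 𝓗.isLowerSet_supp S
  have hslice : (#(F.slice d) : ℝ) ≤ gchoose k d := by
    refine card_slice_le_gchoose hF hk (le_trans ?_ hcard)
    rw [← ncard_eq_toFinset_card']
    exact Nat.cast_le.2 (hgp.ncard_supp_le hS hfin)
  have hcount := card_mul_choose_le_card_mul_choose
    (P := {A : Finset (Fin n) | #A = j ∧ ⋂ i ∈ A, 𝓗.H i ⊆ thickening S}.toFinset)
    (fun A hA => (mem_toFinset.1 hA).1) Finset.sized_slice hj fun A hA B hAB hB =>
      Finset.mem_slice.2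
        ⟨mem_toFinset.2 (hgp.mem_supp_of_subset (mem_toFinset.1 hA).2 hAB hB.le), hB⟩
  rw [← ncard_eq_toFinset_card', Fintype.card_fin] at hcount
  calc _ ≤ (#(F.slice d) : ℝ) * d.choose j := by exact_mod_cast hcount
    _ ≤ gchoose k d * d.choose j := by gcongr

lemma ncard_hyperplanes_eq (𝓗 : Arrangement d n) (X : Set (Fin d → ℝ)) :
    {e | 𝓗.H e ⊆ X}.ncard = {A : Finset (Fin n) | #A = 1 ∧ ⋂ i ∈ A, 𝓗.H i ⊆ X}.ncard := by
  rw [← ncard_image_of_injective _ Finset.singleton_injective]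
  congr 1
  ext A
  constructor
  · rintro ⟨e, he, rfl⟩
    exact ⟨Finset.card_singleton e, by simpa using he⟩
  · rintro ⟨hA, hAX⟩
    obtain ⟨e, rfl⟩ := Finset.card_eq_one.1 hA
    exact ⟨e, by simpa using hAX, rfl⟩

section Space

variable {𝓗 : Arrangement 3 n} {S : Set (Set (Fin 3 → ℝ))} {k : ℝ}

theorem GeneralPosition.ncard_lines_le (hgp : 𝓗.GeneralPosition) (hn : 2 < n)
    (hS : S ⊆ 𝓗.chambers) (hfin : S.Finite) (hk : 2 ≤ k)
    (hcard : (S.ncard : ℝ) ≤ ∑ i ∈ Finset.range 4, gchoose k i) :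
    ({A : Finset (Fin n) | #A = 2 ∧ ⋂ i ∈ A, 𝓗.H i ⊆ thickening S}.ncard : ℝ) ≤
      gchoose k 2 * ((k - 2) / ((n : ℝ) - 2)) := by
  have hn' : (2 : ℝ) < n := by exact_mod_cast hn
  have hflats := hgp.ncard_flats_mul_choose_le hS hfin (by norm_num; linarith) hcard
    (Nat.le_succ 2)
  have hchoose : ((n - 2).choose (3 - 2) : ℝ) = n - 2 := by
    rw [Nat.choose_one_right, Nat.cast_sub hn.le, Nat.cast_ofNat]
  rw [hchoose, gchoose_three, show Nat.choose 3 2 = 3 from rfl] at hflats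
  rw [← mul_div_assoc, le_div_iff₀ (by linarith), gchoose_two]
  push_cast at hflats
  linarith

theorem GeneralPosition.ncard_planes_le (hgp : 𝓗.GeneralPosition) (hn : 2 < n)
    (hS : S ⊆ 𝓗.chambers) (hfin : S.Finite) (hk : 2 ≤ k)
    (hcard : (S.ncard : ℝ) ≤ ∑ i ∈ Finset.range 4, gchoose k i) :
    ({e | 𝓗.H e ⊆ thickening S}.ncard : ℝ) ≤
      k * (k - 1) * (k - 2) / (((n : ℝ) - 1) * ((n : ℝ) - 2)) := by
  have hn' : (2 : ℝ) < n := by exact_mod_cast hn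
  have hflats := hgp.ncard_flats_mul_choose_le hS hfin (by norm_num; linarith) hcard
    (j := 1) (by norm_num)
  have hchoose : ((n - 1).choose (3 - 1) : ℝ) = (n - 1) * (n - 2) / 2 := by
    rw [Nat.cast_choose_two, Nat.cast_sub (by omega), Nat.cast_one]
    ring
  rw [hchoose, gchoose_three, Nat.choose_one_right] at hflats
  rw [ncard_hyperplanes_eq, le_div_iff₀ (mul_pos (by linarith) (by linarith))]
  push_cast at hflats
  linarith

end Space

end Arrangement

lemma mul_mul_div_mul_le_mul_div {k m : ℝ} (hk : 2 ≤ k) (hkm : k ≤ m) :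
    k * (k - 1) * (k - 2) / ((m - 1) * (m - 2)) ≤ k * ((k - 2) / (m - 2)) := by
  calc k * (k - 1) * (k - 2) / ((m - 1) * (m - 2))
      = (k - 1) / (m - 1) * (k * ((k - 2) / (m - 2))) := by
        rw [← mul_div_assoc, div_mul_div_comm]
        ring
    _ ≤ k * ((k - 2) / (m - 2)) := mul_le_of_le_one_left
        (mul_nonneg (by linarith) (div_nonneg (by linarith) (by linarith)))
        (div_le_one_of_le₀ (by linarith) (by linarith))

lemma gchoose_two_mul_add_mul_le {k r c : ℝ} (hk : 1 ≤ k) (hr : 0 ≤ r) (hrc : r ≤ c) :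
    gchoose k 2 * r + k * r ≤ c * ∑ i ∈ Finset.range 3, gchoose k i := by
  have hk2 : 0 ≤ gchoose k 2 := gchoose_nonneg (by norm_num; exact hk)
  calc gchoose k 2 * r + k * r ≤ (gchoose k 2 + k) * c := by rw [← add_mul]; gcongr
    _ ≤ c * ∑ i ∈ Finset.range 3, gchoose k i := by
      simp only [Finset.sum_range_succ, Finset.sum_range_zero, gchoose_zero, gchoose_one]
      linarith

/-- For an arrangement of `n` hyperplanes in general position in
`ℝ³` and a set `S` of chambers with `|S| = ∑_{i=0}^3 C(k,i)`, `k ≥ 2`, and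
`(k-2)/(n-2) ≤ c < 1`: letting `L` be the number of pairs `{e,f}` with the whole line
`H_e ∩ H_f` inside `T_S` and `M` the number of `e` with the whole plane `H_e` inside
`T_S`, one has `L ≤ C(k,2)(k-2)/(n-2)`,
`M ≤ k(k-1)(k-2)/((n-1)(n-2)) ≤ k(k-2)/(n-2)`, and
`L + M ≤ c·∑_{i=0}^2 C(k,i)`. -/
theorem stmt15 {n : ℕ} (hn : 2 < n) (𝓗 : Arrangement 3 n)
    (hgp : 𝓗.GeneralPosition)
    (S : Set (Set (Fin 3 → ℝ))) (hS : S ⊆ 𝓗.chambers)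
    (k : ℝ) (hk : 2 ≤ k)
    (hcard : (S.ncard : ℝ) = ∑ i ∈ Finset.range 4, gchoose k i)
    (c : ℝ) (hc : c < 1) (hkc : (k - 2) / ((n : ℝ) - 2) ≤ c) :
    (({A : Finset (Fin n) | A.card = 2 ∧ (⋂ i ∈ A, 𝓗.H i) ⊆ thickening S}.ncard : ℝ)
        ≤ gchoose k 2 * ((k - 2) / ((n : ℝ) - 2))) ∧
    (({e : Fin n | 𝓗.H e ⊆ thickening S}.ncard : ℝ) ≤
        k * (k - 1) * (k - 2) / (((n : ℝ) - 1) * ((n : ℝ) - 2))) ∧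
    (k * (k - 1) * (k - 2) / (((n : ℝ) - 1) * ((n : ℝ) - 2)) ≤
        k * ((k - 2) / ((n : ℝ) - 2))) ∧
    (({A : Finset (Fin n) | A.card = 2 ∧ (⋂ i ∈ A, 𝓗.H i) ⊆ thickening S}.ncard : ℝ)
        + ({e : Fin n | 𝓗.H e ⊆ thickening S}.ncard : ℝ) ≤
      c * ∑ i ∈ Finset.range 3, gchoose k i) := by
  have hn' : (2 : ℝ) < n := by exact_mod_cast hn
  have hkn : k ≤ n := by
    have := (div_lt_one (by linarith)).1 (hkc.trans_lt hc)
    linarith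
  have hfin : S.Finite := finite_of_ncard_pos <| by
    rw [← Nat.cast_pos (α := ℝ), hcard]
    exact sum_gchoose_pos (by norm_num; linarith)
  have hlines := hgp.ncard_lines_le hn hS hfin hk hcard.le
  have hplanes := hgp.ncard_planes_le hn hS hfin hk hcard.le
  have hratio := mul_mul_div_mul_le_mul_div hk hkn
  exact ⟨hlines, hplanes, hratio, (add_le_add hlines (hplanes.trans hratio)).trans <|
    gchoose_two_mul_add_mul_le (by linarith) (div_nonneg (by linarith) (by linarith)) hkc⟩
end
end

section
/- Fix integers 0 < d < n with n ≥ d²/ln 2 + 2d. Then Σ_{i=0}^{d} C(n−d, i) ≥ (1/2)·Σ_{i=0}^{d} C(n, i), where C(m,i) denotes the ordinary binomial coefficient. -/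
/-!
The ratio `C(m + s, i) / C(m, i)` is the product of the `i` factors `1 + s / (m - j)`, `j < i`. For
`i ≤ d` each of them is at most `1 + s / q ≤ exp (s / q)` with `q = m + 1 - d`, so the ratio is at
most `exp (s * d / q)`. Comparing the two sums term by term loses at most this factor, which does
not exceed `2` when `s = d` and `q ≥ d² / ln 2`.
-/

section ShiftedBinomials

variable {k m q : ℕ}

lemma descFactorial_add_mul_pow_le (s : ℕ) (h : q + k ≤ m + 1) :
    (m + s).descFactorial k * q ^ k ≤ m.descFactorial k * (q + s) ^ k := by
  have factor_le : ∀ i ∈ Finset.range k, (m + s - i) * q ≤ (m - i) * (q + s) := by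
    intro i hi
    obtain ⟨p, rfl⟩ : ∃ p, m = i + (q + p) :=
      ⟨m - i - q, by have := Finset.mem_range.mp hi; omega⟩
    calc (i + (q + p) + s - i) * q = (q + p + s) * q := by congr 1; omega
      _ ≤ (q + p) * (q + s) := by nlinarith [Nat.zero_le (p * s)]
      _ = (i + (q + p) - i) * (q + s) := by rw [Nat.add_sub_cancel_left]
  simpa only [Nat.descFactorial_eq_prod_range, Finset.prod_mul_distrib, Finset.prod_const,
    Finset.card_range] using Finset.prod_le_prod' factor_le

lemma choose_add_mul_pow_le (s : ℕ) (h : q + k ≤ m + 1) :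
    (m + s).choose k * q ^ k ≤ m.choose k * (q + s) ^ k := by
  refine Nat.le_of_mul_le_mul_left ?_ k.factorial_pos
  simpa only [Nat.descFactorial_eq_factorial_mul_choose, mul_assoc] using
    descFactorial_add_mul_pow_le s h

lemma sum_choose_add_mul_pow_le (s : ℕ) (h : q + k ≤ m + 1) :
    (∑ i ∈ Finset.range (k + 1), (m + s).choose i) * q ^ k ≤
      (∑ i ∈ Finset.range (k + 1), m.choose i) * (q + s) ^ k := by
  rw [Finset.sum_mul, Finset.sum_mul]
  refine Finset.sum_le_sum fun i hi ↦ ?_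
  obtain ⟨j, rfl⟩ := Nat.exists_eq_add_of_le (Finset.mem_range_succ_iff.mp hi)
  calc (m + s).choose i * q ^ (i + j)
      = (m + s).choose i * q ^ i * q ^ j := by ring
    _ ≤ m.choose i * (q + s) ^ i * (q + s) ^ j := by
        gcongr ?_ * ?_ ^ j
        · exact choose_add_mul_pow_le s (by omega)
        · exact Nat.le_add_right q s
    _ = m.choose i * (q + s) ^ (i + j) := by ring

end ShiftedBinomials

lemma add_pow_le_mul_pow_of_mul_le_mul_log {a c q : ℝ} {k : ℕ} (ha : 0 ≤ a) (hq : 0 < q)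
    (hc : 0 < c) (h : a * k ≤ q * Real.log c) : (q + a) ^ k ≤ c * q ^ k := by
  have exponent_le : k * (a / q) ≤ Real.log c := by
    rw [← mul_div_assoc, div_le_iff₀ hq]
    linarith
  calc (q + a) ^ k = (a / q + 1) ^ k * q ^ k := by
        rw [← mul_pow]
        field_simp
        ring
    _ ≤ Real.exp (a / q) ^ k * q ^ k := by
        gcongr
        exact Real.add_one_le_exp _
    _ = Real.exp (k * (a / q)) * q ^ k := by rw [Real.exp_nat_mul]
    _ ≤ c * q ^ k := by
        gcongr
        exact (Real.le_log_iff_exp_le hc).mp exponent_le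

lemma sum_choose_add_le_mul_sum_choose {c : ℝ} {k m q s : ℕ} (hq : 0 < q) (hqm : q + k ≤ m + 1)
    (hc : 0 < c) (h : (s : ℝ) * k ≤ q * Real.log c) :
    ∑ i ∈ Finset.range (k + 1), ((m + s).choose i : ℝ) ≤
      c * ∑ i ∈ Finset.range (k + 1), (m.choose i : ℝ) := by
  have hq' : (0 : ℝ) < q := by exact_mod_cast hq
  refine le_of_mul_le_mul_right ?_ (pow_pos hq' k)
  calc (∑ i ∈ Finset.range (k + 1), ((m + s).choose i : ℝ)) * (q : ℝ) ^ k
      ≤ (∑ i ∈ Finset.range (k + 1), (m.choose i : ℝ)) * ((q : ℝ) + s) ^ k := by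
        exact_mod_cast sum_choose_add_mul_pow_le s hqm
    _ ≤ (∑ i ∈ Finset.range (k + 1), (m.choose i : ℝ)) * (c * (q : ℝ) ^ k) := by
        gcongr
        exact add_pow_le_mul_pow_of_mul_le_mul_log s.cast_nonneg hq' hc h
    _ = c * (∑ i ∈ Finset.range (k + 1), (m.choose i : ℝ)) * (q : ℝ) ^ k := by ring

theorem stmt17_general {c : ℝ} (d s n : ℕ) (hc : 1 < c)
    (hn : (s : ℝ) * d / Real.log c + s + d < (n : ℝ) + 1) :
    ∑ i ∈ Finset.range (d + 1), (n.choose i : ℝ) ≤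
      c * ∑ i ∈ Finset.range (d + 1), ((n - s).choose i : ℝ) := by
  have hlog : 0 < Real.log c := Real.log_pos hc
  have hsd : s + d < n + 1 := by
    have : 0 ≤ (s : ℝ) * d / Real.log c := by positivity
    exact_mod_cast (by linarith : (s : ℝ) + d < n + 1)
  obtain ⟨m, rfl⟩ : ∃ m, n = m + s := ⟨n - s, by omega⟩
  obtain ⟨q, hqm⟩ : ∃ q, m + 1 = q + d := ⟨m + 1 - d, by omega⟩
  have hqm' : (m : ℝ) + 1 = q + d := by exact_mod_cast hqm
  have hsq : (s : ℝ) * d ≤ q * Real.log c := by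
    rw [← div_le_iff₀ hlog]
    push_cast at hn
    linarith
  rw [Nat.add_sub_cancel]
  exact sum_choose_add_le_mul_sum_choose (by omega) hqm.ge (by linarith) hsq

/-- Fix integers `0 < d < n` with `n ≥ d²/ln 2 + 2d`. Then
`∑_{i=0}^d C(n-d, i) ≥ (1/2)·∑_{i=0}^d C(n, i)` (ordinary binomial coefficients). -/
theorem stmt17 (d n : ℕ) (hd : 0 < d) (hdn : d < n)
    (hn : (d : ℝ) ^ 2 / Real.log 2 + 2 * d ≤ (n : ℝ)) :
    (1 / 2 : ℝ) * ∑ i ∈ Finset.range (d + 1), (Nat.choose n i : ℝ) ≤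
      ∑ i ∈ Finset.range (d + 1), (Nat.choose (n - d) i : ℝ) := by
  have := stmt17_general d d n one_lt_two (by rw [← sq]; linarith)
  linarith
end

section
/- Let k ≥ 4 and let p_1,…,p_k be points on a circle in ℝ², in convex position, such that no three diagonals of the convex polygon P := conv{p_1,…,p_k} meet at a common interior point of P. Let 𝓗 be the arrangement consisting of all C(k,2) lines through pairs p_i, p_j, and let S be the set of chambers of 𝓗 contained in P. Then |S| = C(k,4) + C(k,2) − k + 1 and |∂S| = k. In particular, for this (non-general-position) arrangement |∂S| = Θ(|S|^{1/4}). -/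
open Set Topology

noncomputable section

/-- The line in the Euclidean plane through two (distinct) points. -/
def lineThrough (x y : EuclideanSpace ℝ (Fin 2)) : Set (EuclideanSpace ℝ (Fin 2)) :=
  {z | ∃ t : ℝ, z = x + t • (y - x)}

/-- The arrangement of all lines through pairs of the points `p i`. -/
def linesOf {k : ℕ} (p : Fin k → EuclideanSpace ℝ (Fin 2)) :
    Set (Set (EuclideanSpace ℝ (Fin 2))) :=
  {L | ∃ i j : Fin k, i ≠ j ∧ L = lineThrough (p i) (p j)}

/-- The complement of the union of the lines. -/
def freePts {k : ℕ} (p : Fin k → EuclideanSpace ℝ (Fin 2)) :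
    Set (EuclideanSpace ℝ (Fin 2)) :=
  {x | ∀ L ∈ linesOf p, x ∉ L}

/-- The chambers of the line arrangement: connected components of the complement. -/
def chambersOf {k : ℕ} (p : Fin k → EuclideanSpace ℝ (Fin 2)) :
    Set (Set (EuclideanSpace ℝ (Fin 2))) :=
  {C | ∃ x ∈ freePts p, C = connectedComponentIn (freePts p) x}

/-- Adjacency in the chamber graph: two distinct chambers sharing a common facet,
i.e. whose closures have a common point lying on exactly one line of the
arrangement. -/
def AdjOf {k : ℕ} (p : Fin k → EuclideanSpace ℝ (Fin 2))
    (C C' : Set (EuclideanSpace ℝ (Fin 2))) : Prop :=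
  C ∈ chambersOf p ∧ C' ∈ chambersOf p ∧ C ≠ C' ∧
  ∃ x, x ∈ closure C ∧ x ∈ closure C' ∧ ∃! L, L ∈ linesOf p ∧ x ∈ L

/-- The edge boundary of a set `S` of chambers, as ordered pairs `(C, C')` of
adjacent chambers with `C ∈ S`, `C' ∉ S`. -/
def edgeBoundaryOf {k : ℕ} (p : Fin k → EuclideanSpace ℝ (Fin 2))
    (S : Set (Set (EuclideanSpace ℝ (Fin 2)))) :
    Set (Set (EuclideanSpace ℝ (Fin 2)) × Set (EuclideanSpace ℝ (Fin 2))) :=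
  {q | q.1 ∈ S ∧ q.2 ∉ S ∧ AdjOf p q.1 q.2}

/-!
Deletion–restriction along one hyperplane at a time shows that an arrangement which is simple along
a convex set has as many cells meeting that set as it has flats there. Inside the polygon the flats
are the plane, the `C(k,2) - k` diagonals, and the crossing points of two diagonals, which
correspond to the four-element sets of vertices.

Two adjacent chambers are separated by a single line, which for an edge leaving the polygon is that
of a side. The relative interior of a side meets no other line of the arrangement, so it lies on the
boundary of exactly one chamber inside and one outside, and each side contributes one edge.
-/

section SignCells

variable {ι E : Type*} [AddCommGroup E] [Module ℝ E] {f : ι → E →ᵃ[ℝ] ℝ} {F : Finset ι}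
  {V C : Set E} {m : ι} {s : SignType} {x y z w : E}

/-- The region where the affine form `f i` has sign `s`: one of the two open half-spaces, or the
hyperplane `f i = 0`, which is how a hyperplane of an arrangement is encoded throughout. -/
def signRegion (f : ι → E →ᵃ[ℝ] ℝ) (i : ι) (s : SignType) : Set E :=
  {x | SignType.sign (f i x) = s}

/-- The face of the arrangement `F` with sign vector `σ`. -/
def signCell (f : ι → E →ᵃ[ℝ] ℝ) (F : Finset ι) (σ : ι → SignType) : Set E :=
  ⋂ i ∈ F, signRegion f i (σ i)

/-- The face of the arrangement `F` containing `x`. -/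
def faceAt (f : ι → E →ᵃ[ℝ] ℝ) (F : Finset ι) (x : E) : Set E :=
  signCell f F fun i ↦ SignType.sign (f i x)

/-- The complement of the hyperplanes of the arrangement `F`. -/
def freeSet (f : ι → E →ᵃ[ℝ] ℝ) (F : Finset ι) : Set E :=
  {x | ∀ i ∈ F, f i x ≠ 0}

/-- The cells (full-dimensional faces) of the arrangement `F` that meet `V`. -/
def cellsMeeting (f : ι → E →ᵃ[ℝ] ℝ) (F : Finset ι) (V : Set E) : Set (Set E) :=
  faceAt f F '' (V ∩ freeSet f F)

/-- The flats of the arrangement `F` that meet `V`, each encoded by a set of hyperplanes having a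
common point in `V`; this is one-to-one if the arrangement is simple along `V`. -/
def flatsMeeting (f : ι → E →ᵃ[ℝ] ℝ) (F : Finset ι) (V : Set E) : Set (Finset ι) :=
  {s | s ⊆ F ∧ ∃ x ∈ V, ∀ i ∈ s, f i x = 0}

/-- The arrangement `F` is simple along `V`: from a point of `V` on several hyperplanes one can
move within `V`, in both directions of a line, off any one of them while staying on the others.
For open `V` this says that the hyperplanes through a point of `V` are independent; the present
form is inherited by the restriction to a hyperplane. -/
def IsSimpleOn (f : ι → E →ᵃ[ℝ] ℝ) (F : Finset ι) (V : Set E) : Prop :=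
  ∀ s ⊆ F, ∀ i ∈ F, i ∉ s → ∀ z ∈ V, (∀ j ∈ s, f j z = 0) → f i z = 0 →
    ∃ w, (∀ j ∈ s, f j w = 0) ∧ f i w ≠ 0 ∧ ∀ᶠ t in 𝓝 (0 : ℝ), AffineMap.lineMap z w t ∈ V

lemma mem_signRegion : x ∈ signRegion f m s ↔ SignType.sign (f m x) = s := Iff.rfl

lemma mem_faceAt : y ∈ faceAt f F x ↔ ∀ i ∈ F, SignType.sign (f i y) = SignType.sign (f i x) := by
  simp only [faceAt, signCell, mem_iInter, mem_signRegion]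

lemma self_mem_faceAt : x ∈ faceAt f F x := mem_faceAt.2 fun _ _ ↦ rfl

lemma faceAt_eq_of_mem (h : y ∈ faceAt f F x) : faceAt f F y = faceAt f F x := by
  ext z
  rw [mem_faceAt] at h
  rw [mem_faceAt, mem_faceAt]
  exact forall₂_congr fun i hi ↦ by rw [h i hi]

lemma convex_signRegion (f : ι → E →ᵃ[ℝ] ℝ) (i : ι) (s : SignType) :
    Convex ℝ (signRegion f i s) :=
  (ordConnected_singleton.preimage_mono SignType.sign.monotone).convex.affine_preimage (f i)

lemma convex_signCell (f : ι → E →ᵃ[ℝ] ℝ) (F : Finset ι) (σ : ι → SignType) :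
    Convex ℝ (signCell f F σ) :=
  convex_iInter₂ fun i _ ↦ convex_signRegion f i (σ i)

lemma faceAt_insert [DecidableEq ι] (hx : x ∈ signRegion f m s) :
    faceAt f (insert m F) x = signRegion f m s ∩ faceAt f F x := by
  rw [faceAt, signCell, Finset.set_biInter_insert, mem_signRegion.1 hx]
  rfl

lemma faceAt_subset_freeSet (hx : x ∈ freeSet f F) : faceAt f F x ⊆ freeSet f F := by
  intro y hy i hi
  rw [← sign_ne_zero, mem_faceAt.1 hy i hi, sign_ne_zero]
  exact hx i hi

lemma eq_faceAt_of_mem_cellsMeeting (hC : C ∈ cellsMeeting f F V) (hx : x ∈ C) :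
    C = faceAt f F x := by
  obtain ⟨y, -, rfl⟩ := hC
  exact (faceAt_eq_of_mem hx).symm

lemma cellsMeeting_union (f : ι → E →ᵃ[ℝ] ℝ) (F : Finset ι) (V W : Set E) :
    cellsMeeting f F (V ∪ W) = cellsMeeting f F V ∪ cellsMeeting f F W := by
  rw [cellsMeeting, union_inter_distrib_right, image_union]
  rfl

lemma injOn_signRegion_inter (f : ι → E →ᵃ[ℝ] ℝ) (F : Finset ι) (V : Set E) (m : ι)
    (s : SignType) :
    InjOn (signRegion f m s ∩ ·) (cellsMeeting f F (V ∩ signRegion f m s)) := by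
  rintro _ ⟨x, ⟨⟨-, hxs⟩, -⟩, rfl⟩ D hD h
  have hxD : x ∈ signRegion f m s ∩ D := h.subset ⟨hxs, self_mem_faceAt⟩
  exact (eq_faceAt_of_mem_cellsMeeting hD hxD.2).symm

lemma mem_freeSet_insert [DecidableEq ι] :
    x ∈ freeSet f (insert m F) ↔ f m x ≠ 0 ∧ x ∈ freeSet f F :=
  Finset.forall_mem_insert _ _ _

lemma signRegion_neg_one_union_one (f : ι → E →ᵃ[ℝ] ℝ) (m : ι) :
    signRegion f m (-1) ∪ signRegion f m 1 = {x | f m x ≠ 0} := by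
  ext x
  simp only [mem_union, mem_signRegion, sign_eq_neg_one_iff, sign_eq_one_iff, mem_ofPred_eq,
    ne_iff_lt_or_gt]

lemma cellsMeeting_inter_of_ne_zero [DecidableEq ι] (hs : s ≠ 0) :
    cellsMeeting f (insert m F) (V ∩ signRegion f m s) =
      (signRegion f m s ∩ ·) '' cellsMeeting f F (V ∩ signRegion f m s) := by
  have hne : V ∩ signRegion f m s ∩ freeSet f (insert m F) =
      V ∩ signRegion f m s ∩ freeSet f F := by
    ext x
    simp only [mem_inter_iff, mem_freeSet_insert]
    refine and_congr_right fun hx ↦ and_iff_right ?_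
    rwa [← sign_ne_zero, mem_signRegion.1 hx.2]
  rw [cellsMeeting, cellsMeeting, hne, image_image]
  exact image_congr fun x hx ↦ faceAt_insert hx.1.2

lemma cellsMeeting_insert [DecidableEq ι] (f : ι → E →ᵃ[ℝ] ℝ) (F : Finset ι) (V : Set E) (m : ι) :
    cellsMeeting f (insert m F) V =
      (signRegion f m (-1) ∩ ·) '' cellsMeeting f F (V ∩ signRegion f m (-1)) ∪
        (signRegion f m 1 ∩ ·) '' cellsMeeting f F (V ∩ signRegion f m 1) := by
  have hV : V ∩ freeSet f (insert m F) =
      (V ∩ signRegion f m (-1) ∪ V ∩ signRegion f m 1) ∩ freeSet f (insert m F) := by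
    rw [← inter_union_distrib_left, signRegion_neg_one_union_one]
    ext x
    simp only [mem_inter_iff, mem_freeSet_insert, mem_ofPred_eq]
    tauto
  rw [← cellsMeeting_inter_of_ne_zero (by decide), ← cellsMeeting_inter_of_ne_zero (by decide),
    ← cellsMeeting_union, cellsMeeting, hV, cellsMeeting]

lemma encard_cellsMeeting_insert [DecidableEq ι] (f : ι → E →ᵃ[ℝ] ℝ) (F : Finset ι) (V : Set E)
    (m : ι) :
    (cellsMeeting f (insert m F) V).encard =
      (cellsMeeting f F (V ∩ signRegion f m (-1))).encard +
        (cellsMeeting f F (V ∩ signRegion f m 1)).encard := by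
  rw [cellsMeeting_insert, encard_union_eq, (injOn_signRegion_inter f F V m (-1)).encard_image,
    (injOn_signRegion_inter f F V m 1).encard_image]
  rw [Set.disjoint_left]
  rintro _ ⟨_, ⟨x, hx, rfl⟩, rfl⟩ ⟨D, -, h⟩
  have hx₁ : x ∈ signRegion f m 1 ∩ D := h.superset ⟨hx.1.2, self_mem_faceAt⟩
  have := (mem_signRegion.1 hx.1.2).symm.trans hx₁.1
  contradiction

lemma continuous_apply_lineMap (g : E →ᵃ[ℝ] ℝ) (z w : E) :
    Continuous fun t : ℝ ↦ g (AffineMap.lineMap z w t) := by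
  simp only [AffineMap.apply_lineMap, AffineMap.lineMap_apply_ring]
  fun_prop

lemma eventually_lineMap_mem_faceAt (hz : z ∈ freeSet f F) (w : E) :
    ∀ᶠ t in 𝓝 (0 : ℝ), AffineMap.lineMap z w t ∈ faceAt f F z := by
  simp only [mem_faceAt, Filter.eventually_all_finset]
  intro i hi
  have hcont : ContinuousAt (fun t : ℝ ↦ SignType.sign (f i (AffineMap.lineMap z w t))) 0 :=
    ContinuousAt.comp (continuousAt_sign_of_ne_zero (by simpa using hz i hi))
      (continuous_apply_lineMap (f i) z w).continuousAt
  rw [ContinuousAt, nhds_discrete SignType, Filter.tendsto_pure] at hcont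
  simpa only [AffineMap.lineMap_apply_zero] using hcont

lemma sign_apply_lineMap_of_apply_eq_zero (g : E →ᵃ[ℝ] ℝ) (hz : g z = 0) (w : E) (t : ℝ) :
    SignType.sign (g (AffineMap.lineMap z w t)) = SignType.sign t * SignType.sign (g w) := by
  rw [AffineMap.apply_lineMap, AffineMap.lineMap_apply_ring, hz, mul_zero, zero_add, sign_mul]

lemma frequently_sign_eq (s : SignType) : ∃ᶠ t in 𝓝 (0 : ℝ), SignType.sign t = s := by
  match s with
  | 0 =>
    have h : ∃ᶠ t in pure (0 : ℝ), SignType.sign t = 0 := Filter.frequently_pure.2 sign_zero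
    exact h.filter_mono (pure_le_nhds 0)
  | 1 =>
    have h : ∀ᶠ t in 𝓝[>] (0 : ℝ), SignType.sign t = 1 :=
      eventually_mem_nhdsWithin.mono fun _ ht ↦ sign_pos ht
    exact h.frequently.filter_mono nhdsWithin_le_nhds
  | -1 =>
    have h : ∀ᶠ t in 𝓝[<] (0 : ℝ), SignType.sign t = -1 :=
      eventually_mem_nhdsWithin.mono fun _ ht ↦ sign_neg ht
    exact h.frequently.filter_mono nhdsWithin_le_nhds

lemma sign_mul_self_of_ne_zero {a : ℝ} (ha : a ≠ 0) : SignType.sign a * SignType.sign a = 1 := by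
  rw [← sign_mul, sign_pos (mul_self_pos.2 ha)]

lemma cellsMeeting_inter_zero_subset [DecidableEq ι] (h : IsSimpleOn f (insert m F) V)
    (s : SignType) :
    cellsMeeting f F (V ∩ signRegion f m 0) ⊆ cellsMeeting f F (V ∩ signRegion f m s) := by
  rintro _ ⟨z, ⟨⟨hzV, hzm⟩, hz⟩, rfl⟩
  obtain ⟨w, -, hw, hwV⟩ := h ∅ (Finset.empty_subset _) m (Finset.mem_insert_self m F)
    (Finset.notMem_empty m) z hzV (by simp) (sign_eq_zero_iff.1 hzm)
  obtain ⟨t, ht, htV, htz⟩ := ((frequently_sign_eq (s * SignType.sign (f m w))).and_eventually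
    (hwV.and (eventually_lineMap_mem_faceAt hz w))).exists
  refine ⟨AffineMap.lineMap z w t, ⟨⟨htV, ?_⟩, faceAt_subset_freeSet hz htz⟩,
    faceAt_eq_of_mem htz⟩
  rw [mem_signRegion, sign_apply_lineMap_of_apply_eq_zero _ (sign_eq_zero_iff.1 hzm), ht,
    mul_assoc, sign_mul_self_of_ne_zero hw, mul_one]

lemma exists_mem_segment_apply_eq_zero (g : E →ᵃ[ℝ] ℝ) (hx : g x ≤ 0) (hy : 0 ≤ g y) :
    ∃ z ∈ segment ℝ x y, g z = 0 := by
  have h₀ : (0 : ℝ) ∈ g '' segment ℝ x y := by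
    rw [image_segment, segment_eq_Icc (hx.trans hy)]
    exact ⟨hx, hy⟩
  exact h₀

lemma cellsMeeting_inter_neg_one_inter_one_subset (hV : Convex ℝ V) :
    cellsMeeting f F (V ∩ signRegion f m (-1)) ∩ cellsMeeting f F (V ∩ signRegion f m 1) ⊆
      cellsMeeting f F (V ∩ signRegion f m 0) := by
  rintro _ ⟨⟨x, ⟨⟨hxV, hx⟩, hxF⟩, rfl⟩, y, ⟨⟨hyV, hy⟩, -⟩, hxy⟩
  obtain ⟨z, hz, hz₀⟩ := exists_mem_segment_apply_eq_zero (f m) (sign_eq_neg_one_iff.1 hx).le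
    (sign_eq_one_iff.1 hy).le
  have hzx : z ∈ faceAt f F x :=
    (convex_signCell f F _).segment_subset self_mem_faceAt (hxy.subset self_mem_faceAt) hz
  exact ⟨z, ⟨⟨hV.segment_subset hxV hyV hz, sign_eq_zero_iff.2 hz₀⟩,
    faceAt_subset_freeSet hxF hzx⟩, faceAt_eq_of_mem hzx⟩

lemma encard_cellsMeeting_insert_of_isSimpleOn [DecidableEq ι] (hV : Convex ℝ V)
    (h : IsSimpleOn f (insert m F) V) :
    (cellsMeeting f (insert m F) V).encard =
      (cellsMeeting f F V).encard + (cellsMeeting f F (V ∩ signRegion f m 0)).encard := by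
  set A : SignType → Set (Set E) := fun s ↦ cellsMeeting f F (V ∩ signRegion f m s)
  have hzero : ∀ s, A 0 ⊆ A s := cellsMeeting_inter_zero_subset h
  have hinter : A (-1) ∩ A 1 = A 0 :=
    (cellsMeeting_inter_neg_one_inter_one_subset hV).antisymm
      (subset_inter (hzero (-1)) (hzero 1))
  have hunion : A (-1) ∪ A 1 = cellsMeeting f F V := by
    have hsplit : V = V ∩ signRegion f m (-1) ∪ V ∩ signRegion f m 1 ∪ V ∩ signRegion f m 0 := by
      ext x
      have := SignType.trichotomy (SignType.sign (f m x))
      simp only [mem_union, mem_inter_iff, mem_signRegion]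
      tauto
    calc A (-1) ∪ A 1 = A (-1) ∪ A 1 ∪ A 0 :=
          (union_eq_self_of_subset_right ((hzero 1).trans subset_union_right)).symm
      _ = cellsMeeting f F V := by rw [← cellsMeeting_union, ← cellsMeeting_union, ← hsplit]
  rw [encard_cellsMeeting_insert, ← encard_union_add_encard_inter]
  exact congrArg₂ (encard · + encard ·) hunion hinter

lemma IsSimpleOn.of_insert [DecidableEq ι] (h : IsSimpleOn f (insert m F) V) :
    IsSimpleOn f F V := fun s hs i hi ↦
  h s (hs.trans (Finset.subset_insert m F)) i (Finset.mem_insert_of_mem hi)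

lemma IsSimpleOn.inter_signRegion_zero [DecidableEq ι] (h : IsSimpleOn f (insert m F) V)
    (hm : m ∉ F) : IsSimpleOn f F (V ∩ signRegion f m 0) := by
  intro s hs i hi his z hz hzs hzi
  have hzm : f m z = 0 := sign_eq_zero_iff.1 hz.2
  have hi' : i ∉ insert m s := by
    simp only [Finset.mem_insert, not_or]
    exact ⟨fun him ↦ hm (him ▸ hi), his⟩
  obtain ⟨w, hw, hwi, hwV⟩ := h (insert m s) (Finset.insert_subset_insert m hs) i
    (Finset.mem_insert_of_mem hi) hi' z hz.1 (Finset.forall_mem_insert _ _ _ |>.2 ⟨hzm, hzs⟩) hzi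
  rw [Finset.forall_mem_insert] at hw
  refine ⟨w, hw.2, hwi, hwV.mono fun t ht ↦ ⟨ht, ?_⟩⟩
  rw [mem_signRegion, sign_apply_lineMap_of_apply_eq_zero _ hzm, hw.1, sign_zero, mul_zero]

lemma flatsMeeting_insert [DecidableEq ι] (f : ι → E →ᵃ[ℝ] ℝ) (F : Finset ι) (V : Set E) (m : ι) :
    flatsMeeting f (insert m F) V =
      flatsMeeting f F V ∪ insert m '' flatsMeeting f F (V ∩ signRegion f m 0) := by
  ext s
  constructor
  · rintro ⟨hs, x, hxV, hx⟩
    by_cases hms : m ∈ s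
    · exact .inr ⟨s.erase m, ⟨Finset.subset_insert_iff.1 hs, x,
        ⟨hxV, sign_eq_zero_iff.2 (hx m hms)⟩, fun i hi ↦ hx i (Finset.mem_of_mem_erase hi)⟩,
        Finset.insert_erase hms⟩
    · exact .inl ⟨(Finset.subset_insert_iff_of_notMem hms).1 hs, x, hxV, hx⟩
  · rintro (⟨hs, x, hxV, hx⟩ | ⟨s, ⟨hs, x, ⟨hxV, hxm⟩, hx⟩, rfl⟩)
    · exact ⟨hs.trans (Finset.subset_insert m F), x, hxV, hx⟩
    · exact ⟨Finset.insert_subset_insert m hs, x, hxV,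
        (Finset.forall_mem_insert _ _ _).2 ⟨sign_eq_zero_iff.1 hxm, hx⟩⟩

lemma encard_flatsMeeting_insert [DecidableEq ι] (f : ι → E →ᵃ[ℝ] ℝ) (V : Set E) (hm : m ∉ F) :
    (flatsMeeting f (insert m F) V).encard =
      (flatsMeeting f F V).encard + (flatsMeeting f F (V ∩ signRegion f m 0)).encard := by
  have hnotMem : ∀ {W : Set E} {s : Finset ι}, s ∈ flatsMeeting f F W → m ∉ s :=
    fun hs hms ↦ hm (hs.1 hms)
  rw [flatsMeeting_insert, encard_union_eq, InjOn.encard_image]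
  · intro s hs t ht hst
    rw [← Finset.erase_insert (hnotMem hs), hst, Finset.erase_insert (hnotMem ht)]
  · rw [Set.disjoint_left]
    rintro _ hs ⟨t, -, rfl⟩
    exact hnotMem hs (Finset.mem_insert_self m t)

theorem encard_cellsMeeting_eq_encard_flatsMeeting (hV : Convex ℝ V)
    (h : IsSimpleOn f F V) :
    (cellsMeeting f F V).encard = (flatsMeeting f F V).encard := by
  classical
  induction F using Finset.induction_on generalizing V with
  | empty =>
    rcases V.eq_empty_or_nonempty with rfl | hne
    · simp [cellsMeeting, flatsMeeting]
    · have hcells : cellsMeeting f ∅ V = {univ} := by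
        have hface : faceAt f ∅ = fun _ ↦ univ := by ext; simp [faceAt, signCell]
        simpa [cellsMeeting, freeSet, hface] using hne.image_const univ
      have hflats : flatsMeeting f ∅ V = {∅} := by
        ext s
        simpa +contextual [flatsMeeting] using fun _ : s = ∅ ↦ nonempty_def.1 hne
      rw [hcells, hflats, encard_singleton, encard_singleton]
  | insert m F hm ih =>
    rw [encard_cellsMeeting_insert_of_isSimpleOn hV h, encard_flatsMeeting_insert f V hm,
      ih hV h.of_insert,
      ih (hV.inter (convex_signRegion f m 0)) (h.inter_signRegion_zero hm)]

lemma mem_signCell {σ : ι → SignType} :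
    x ∈ signCell f F σ ↔ ∀ i ∈ F, SignType.sign (f i x) = σ i := by
  simp only [signCell, mem_iInter, mem_signRegion]

lemma faceAt_mem_cellsMeeting_signCell {B : Finset ι} {σ : ι → SignType} (hBF : B ⊆ F)
    (hx : x ∈ freeSet f F) :
    faceAt f F x ∈ cellsMeeting f F (signCell f B σ) ↔ x ∈ signCell f B σ := by
  refine ⟨fun h ↦ ?_, fun h ↦ ⟨x, ⟨h, hx⟩, rfl⟩⟩
  obtain ⟨y, ⟨hy, -⟩, hyx⟩ := h
  have hxy : x ∈ faceAt f F y := hyx.superset self_mem_faceAt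
  exact mem_signCell.2 fun i hi ↦ (mem_faceAt.1 hxy i (hBF hi)).trans (mem_signCell.1 hy i hi)

/-- The cell of `F` adjacent, on the side `s` of the hyperplane `m`, to a point `z` of that
hyperplane which lies on no other hyperplane. -/
def facetSide [DecidableEq ι] (f : ι → E →ᵃ[ℝ] ℝ) (F : Finset ι) (m : ι) (z : E) (s : SignType) :
    Set E :=
  signRegion f m s ∩ faceAt f (F.erase m) z

lemma faceAt_eq_facetSide [DecidableEq ι] (hm : m ∈ F) (hx : x ∈ facetSide f F m z s) :
    faceAt f F x = facetSide f F m z s := by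
  rw [← Finset.insert_erase hm, faceAt_insert hx.1, faceAt_eq_of_mem hx.2,
    Finset.insert_erase hm, facetSide]

/-- The relative interior of the facet on the hyperplane `m` of the polyhedron
`⋂ n ∈ B, {f n > 0}`. -/
def openFacet [DecidableEq ι] (f : ι → E →ᵃ[ℝ] ℝ) (B : Finset ι) (m : ι) : Set E :=
  signRegion f m 0 ∩ signCell f (B.erase m) 1

lemma convex_openFacet [DecidableEq ι] (f : ι → E →ᵃ[ℝ] ℝ) (B : Finset ι) (m : ι) :
    Convex ℝ (openFacet f B m) :=
  (convex_signRegion f m 0).inter (convex_signCell f _ 1)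

lemma sign_apply_of_mem_facetSide [DecidableEq ι] {n : ι} (hx : x ∈ facetSide f F m z s)
    (hn : n ∈ F) (hnm : n ≠ m) : SignType.sign (f n x) = SignType.sign (f n z) :=
  mem_faceAt.1 hx.2 n (Finset.mem_erase.2 ⟨hnm, hn⟩)

lemma sign_apply_of_mem_openFacet [DecidableEq ι] {B : Finset ι} {n : ι} (hx : x ∈ openFacet f B m)
    (hn : n ∈ B) (hnm : n ≠ m) : SignType.sign (f n x) = 1 :=
  mem_signCell.1 hx.2 n (Finset.mem_erase.2 ⟨hnm, hn⟩)

lemma mem_signCell_iff_of_mem_facetSide [DecidableEq ι] {B : Finset ι} (hBF : B ⊆ F) (hm : m ∈ B)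
    (hz : z ∈ openFacet f B m) (hx : x ∈ facetSide f F m z s) : x ∈ signCell f B 1 ↔ s = 1 := by
  rw [mem_signCell]
  refine ⟨fun h ↦ (mem_signRegion.1 hx.1).symm.trans (h m hm), fun hs n hn ↦ ?_⟩
  obtain rfl | hnm := eq_or_ne n m
  · exact (mem_signRegion.1 hx.1).trans hs
  · exact (sign_apply_of_mem_facetSide hx (hBF hn) hnm).trans
      (sign_apply_of_mem_openFacet hz hn hnm)

lemma mem_freeSet_of_mem_facetSide [DecidableEq ι] (hm : m ∈ F) (hz : z ∈ freeSet f (F.erase m))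
    (hs : s ≠ 0) (hx : x ∈ facetSide f F m z s) : x ∈ freeSet f F := by
  rw [← Finset.insert_erase hm, mem_freeSet_insert, ← sign_ne_zero, hx.1]
  exact ⟨hs, faceAt_subset_freeSet hz hx.2⟩

lemma mem_freeSet_erase_of_existsUnique [DecidableEq ι] (h : ∃! n, n ∈ F ∧ f n z = 0) (hm : m ∈ F)
    (hzm : f m z = 0) : z ∈ freeSet f (F.erase m) := fun _ hn hzn ↦
  Finset.ne_of_mem_erase hn (h.unique ⟨Finset.mem_of_mem_erase hn, hzn⟩ ⟨hm, hzm⟩)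

lemma existsUnique_of_mem_freeSet_erase [DecidableEq ι] (hz : z ∈ freeSet f (F.erase m))
    (hm : m ∈ F) (hzm : f m z = 0) : ∃! n, n ∈ F ∧ f n z = 0 :=
  ⟨m, ⟨hm, hzm⟩, fun n hn ↦ by_contra fun hnm ↦ hz n (Finset.mem_erase.2 ⟨hnm, hn.1⟩) hn.2⟩

/-- The pairs of cells of `F`, the first one meeting `V` and the second one not, that have a
common facet, i.e. a common boundary point on exactly one hyperplane. -/
def cellBoundary [TopologicalSpace E] (f : ι → E →ᵃ[ℝ] ℝ) (F : Finset ι) (V : Set E) :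
    Set (Set E × Set E) :=
  {q | q.1 ∈ cellsMeeting f F V ∧ q.2 ∈ cellsMeeting f F univ \ cellsMeeting f F V ∧
    ∃ z ∈ closure q.1 ∩ closure q.2, ∃! m, m ∈ F ∧ f m z = 0}

variable [TopologicalSpace E] {B : Finset ι}

lemma continuousAt_sign_apply (hf : ∀ i ∈ F, Continuous (f i)) {i : ι} (hi : i ∈ F)
    (hz : f i z ≠ 0) : ContinuousAt (fun x ↦ SignType.sign (f i x)) z :=
  ContinuousAt.comp (continuousAt_sign_of_ne_zero hz) (hf i hi).continuousAt

lemma connectedComponentIn_freeSet [IsTopologicalAddGroup E] [ContinuousSMul ℝ E]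
    (hf : ∀ i ∈ F, Continuous (f i)) (hx : x ∈ freeSet f F) :
    connectedComponentIn (freeSet f F) x = faceAt f F x := by
  apply Subset.antisymm
  · intro y hy
    refine mem_faceAt.2 fun i hi ↦ ?_
    have hcont : ContinuousOn (fun z ↦ SignType.sign (f i z))
        (connectedComponentIn (freeSet f F) x) := fun z hz ↦
      (continuousAt_sign_apply hf hi (connectedComponentIn_subset _ _ hz i hi)).continuousWithinAt
    exact isPreconnected_connectedComponentIn.constant hcont hy (mem_connectedComponentIn hx)
  · exact (convex_signCell f F _).isPreconnected.subset_connectedComponentIn self_mem_faceAt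
      (faceAt_subset_freeSet hx)

lemma faceAt_eq_of_convex_subset_freeSet [IsTopologicalAddGroup E] [ContinuousSMul ℝ E]
    (hf : ∀ i ∈ F, Continuous (f i)) {K : Set E} (hK : Convex ℝ K) (hKF : K ⊆ freeSet f F)
    (hx : x ∈ K) (hy : y ∈ K) : faceAt f F x = faceAt f F y := by
  have hxy : x ∈ connectedComponentIn (freeSet f F) y :=
    hK.isPreconnected.subset_connectedComponentIn hy hKF hx
  rw [connectedComponentIn_freeSet hf (hKF hy)] at hxy
  exact faceAt_eq_of_mem hxy

lemma mem_faceAt_of_mem_closure (hf : ∀ i ∈ F, Continuous (f i)) (hz : z ∈ freeSet f F)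
    (hzx : z ∈ closure (faceAt f F x)) : z ∈ faceAt f F x := by
  refine mem_faceAt.2 fun i hi ↦ ?_
  obtain ⟨y, hyx, hyz⟩ : ∃ y ∈ faceAt f F x, SignType.sign (f i y) = SignType.sign (f i z) := by
    have hcont := continuousAt_sign_apply hf hi (hz i hi)
    rw [ContinuousAt, nhds_discrete SignType, Filter.tendsto_pure] at hcont
    exact ((mem_closure_iff_frequently.1 hzx).and_eventually hcont).exists
  rw [← hyz, mem_faceAt.1 hyx i hi]

variable [DecidableEq ι]

lemma faceAt_eq_facetSide_of_mem_closure (hf : ∀ i ∈ F, Continuous (f i)) (hm : m ∈ F)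
    (hz : z ∈ freeSet f (F.erase m)) (hzx : z ∈ closure (faceAt f F x)) :
    faceAt f F x = facetSide f F m z (SignType.sign (f m x)) := by
  refine faceAt_eq_facetSide hm ⟨rfl, ?_⟩
  have hsub : faceAt f F x ⊆ faceAt f (F.erase m) x := by
    rw [faceAt_eq_facetSide hm ⟨rfl, self_mem_faceAt⟩]
    exact inter_subset_right
  have hzx' := mem_faceAt_of_mem_closure (fun i hi ↦ hf i (Finset.mem_of_mem_erase hi)) hz
    (closure_mono hsub hzx)
  rw [faceAt_eq_of_mem hzx']
  exact self_mem_faceAt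

lemma mem_closure_facetSide [IsTopologicalAddGroup E] [ContinuousSMul ℝ E]
    (hz : z ∈ freeSet f (F.erase m)) (hzm : f m z = 0) (hw : f m w ≠ 0) (s : SignType) :
    z ∈ closure (facetSide f F m z s) := by
  have hlim : Filter.Tendsto (AffineMap.lineMap z w) (𝓝 (0 : ℝ)) (𝓝 z) := by
    simpa using AffineMap.lineMap_continuous.tendsto (0 : ℝ) (f := AffineMap.lineMap z w)
  refine mem_closure_of_frequently_of_tendsto ?_ hlim
  refine ((frequently_sign_eq (s * SignType.sign (f m w))).and_eventually
    (eventually_lineMap_mem_faceAt hz w)).mono fun t ⟨ht, htz⟩ ↦ ⟨?_, htz⟩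
  rw [mem_signRegion, sign_apply_lineMap_of_apply_eq_zero _ hzm, ht, mul_assoc,
    sign_mul_self_of_ne_zero hw, mul_one]

lemma exists_eq_facetSide_of_mem_cellBoundary (hf : ∀ i ∈ F, Continuous (f i)) (hBF : B ⊆ F)
    {q : Set E × Set E} (hq : q ∈ cellBoundary f F (signCell f B 1)) :
    ∃ m ∈ B, ∃ z ∈ openFacet f B m, q = (facetSide f F m z 1, facetSide f F m z (-1)) := by
  obtain ⟨C, D⟩ := q
  obtain ⟨⟨x, ⟨hxB, -⟩, rfl : _ = C⟩, ⟨⟨y, ⟨-, hy⟩, rfl : _ = D⟩, hyB⟩, z, ⟨hzx, hzy⟩, hz⟩ := hq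
  obtain ⟨m, hm, hzm⟩ := hz.exists
  have hzF := mem_freeSet_erase_of_existsUnique hz hm hzm
  have hxz := faceAt_eq_facetSide_of_mem_closure hf hm hzF hzx
  have hyz := faceAt_eq_facetSide_of_mem_closure hf hm hzF hzy
  have hxmem : x ∈ facetSide f F m z (SignType.sign (f m x)) := hxz.subset self_mem_faceAt
  have hymem : y ∈ facetSide f F m z (SignType.sign (f m y)) := hyz.subset self_mem_faceAt
  rw [faceAt_mem_cellsMeeting_signCell hBF hy] at hyB
  have hzB : z ∈ signCell f (B.erase m) 1 := by
    refine mem_signCell.2 fun n hn ↦ ?_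
    rw [Finset.mem_erase] at hn
    exact (sign_apply_of_mem_facetSide hxmem (hBF hn.2) hn.1).symm.trans
      (mem_signCell.1 hxB n hn.2)
  have hmB : m ∈ B := by
    by_contra hmB
    rw [Finset.erase_eq_of_notMem hmB] at hzB
    refine hyB (mem_signCell.2 fun n hn ↦ ?_)
    exact (sign_apply_of_mem_facetSide hymem (hBF hn) (ne_of_mem_of_not_mem hn hmB)).trans
      (mem_signCell.1 hzB n hn)
  have hzfacet : z ∈ openFacet f B m := ⟨sign_eq_zero_iff.2 hzm, hzB⟩
  have hxm : SignType.sign (f m x) = 1 :=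
    (mem_signCell_iff_of_mem_facetSide hBF hmB hzfacet hxmem).1 hxB
  have hym : SignType.sign (f m y) = -1 := by
    have h₁ := (mem_signCell_iff_of_mem_facetSide hBF hmB hzfacet hymem).not.1 hyB
    have h₀ := sign_ne_zero.2 (hy m hm)
    generalize SignType.sign (f m y) = s at h₀ h₁
    decide +revert
  exact ⟨m, hmB, z, hzfacet, by rw [hxz, hyz, hxm, hym]⟩

variable [IsTopologicalAddGroup E] [ContinuousSMul ℝ E]

lemma facetSide_mem_cellBoundary (hBF : B ⊆ F) (hne : (signCell f B 1).Nonempty) (hm : m ∈ B)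
    (hz : z ∈ openFacet f B m) (hzF : z ∈ freeSet f (F.erase m)) :
    (facetSide f F m z 1, facetSide f F m z (-1)) ∈ cellBoundary f F (signCell f B 1) := by
  obtain ⟨w, hw⟩ := hne
  have hzm : f m z = 0 := sign_eq_zero_iff.1 hz.1
  have hwm : f m w ≠ 0 := (sign_eq_one_iff.1 (mem_signCell.1 hw m hm)).ne'
  have hclosure := mem_closure_facetSide hzF hzm hwm
  have hcell : ∀ s ≠ 0, facetSide f F m z s ∈ cellsMeeting f F univ ∧
      (facetSide f F m z s ∈ cellsMeeting f F (signCell f B 1) ↔ s = 1) := by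
    intro s hs
    obtain ⟨x, hx⟩ := closure_nonempty_iff.1 ⟨z, hclosure s⟩
    have hxF := mem_freeSet_of_mem_facetSide (hBF hm) hzF hs hx
    rw [← faceAt_eq_facetSide (hBF hm) hx, faceAt_mem_cellsMeeting_signCell hBF hxF]
    exact ⟨⟨x, ⟨mem_univ x, hxF⟩, rfl⟩, mem_signCell_iff_of_mem_facetSide hBF hm hz hx⟩
  obtain ⟨-, hin⟩ := hcell 1 (by decide)
  obtain ⟨hout, hout'⟩ := hcell (-1) (by decide)
  exact ⟨hin.2 rfl, ⟨hout, fun h ↦ absurd (hout'.1 h) (by decide)⟩, z,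
    ⟨hclosure 1, hclosure (-1)⟩, existsUnique_of_mem_freeSet_erase hzF (hBF hm) hzm⟩

theorem cellBoundary_eq_image (hf : ∀ i ∈ F, Continuous (f i)) (hBF : B ⊆ F)
    (hfree : ∀ m ∈ B, openFacet f B m ⊆ freeSet f (F.erase m)) (hne : (signCell f B 1).Nonempty)
    {c : ι → E} (hc : ∀ m ∈ B, c m ∈ openFacet f B m) :
    cellBoundary f F (signCell f B 1) =
      (fun m ↦ (facetSide f F m (c m) 1, facetSide f F m (c m) (-1))) '' B := by
  apply Subset.antisymm
  · intro q hq
    obtain ⟨m, hm, z, hz, rfl⟩ := exists_eq_facetSide_of_mem_cellBoundary hf hBF hq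
    have hface : faceAt f (F.erase m) (c m) = faceAt f (F.erase m) z :=
      faceAt_eq_of_convex_subset_freeSet (fun i hi ↦ hf i (Finset.mem_of_mem_erase hi))
        (convex_openFacet f B m) (hfree m hm) (hc m hm) hz
    exact ⟨m, hm, by simp only [facetSide, hface]⟩
  · rintro _ ⟨m, hm, rfl⟩
    exact facetSide_mem_cellBoundary hBF hne hm (hc m hm) (hfree m hm (hc m hm))

theorem encard_cellBoundary (hf : ∀ i ∈ F, Continuous (f i)) (hBF : B ⊆ F)
    (hne : (signCell f B 1).Nonempty) (hfacet : ∀ m ∈ B, (openFacet f B m).Nonempty)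
    (hfree : ∀ m ∈ B, openFacet f B m ⊆ freeSet f (F.erase m)) :
    (cellBoundary f F (signCell f B 1)).encard = B.card := by
  choose! c hc using hfacet
  rw [cellBoundary_eq_image hf hBF hfree hne hc, InjOn.encard_image, encard_coe_eq_coe_finsetCard]
  intro m hm n hn hmn
  by_contra hmn'
  obtain ⟨w, hw⟩ := hne
  obtain ⟨x, hx⟩ : (facetSide f F m (c m) (-1)).Nonempty := closure_nonempty_iff.1
    ⟨c m, mem_closure_facetSide (hfree m hm (hc m hm)) (sign_eq_zero_iff.1 (hc m hm).1)
      (sign_eq_one_iff.1 (mem_signCell.1 hw m hm)).ne' (-1)⟩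
  have hxn : x ∈ facetSide f F n (c n) (-1) := (Prod.ext_iff.1 hmn).2.subset hx
  have hxm := sign_apply_of_mem_facetSide hxn (hBF hm) hmn'
  rw [hx.1, sign_apply_of_mem_openFacet (hc n hn) hm hmn'] at hxm
  contradiction

end SignCells

local notation "ℝ²" => EuclideanSpace ℝ (Fin 2)

section Orientation

variable {k : ℕ} {p : Fin k → ℝ²} {a b c x : ℝ²} {i j l : Fin k}

/-- Twice the signed area of the triangle `a b x`, as an affine form in `x`: it vanishes on the
line through `a` and `b` and is positive when `a, b, x` are in counterclockwise order. -/
def orientForm (a b : ℝ²) : ℝ² →ᵃ[ℝ] ℝ :=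
  ((b 0 - a 0) • (EuclideanSpace.projₗ 1 : ℝ² →ₗ[ℝ] ℝ)
    - (b 1 - a 1) • (EuclideanSpace.projₗ 0 : ℝ² →ₗ[ℝ] ℝ)).toAffineMap
  - AffineMap.const ℝ ℝ² ((b 0 - a 0) * a 1 - (b 1 - a 1) * a 0)

/-- The points `p i` are the vertices of a convex polygon in counterclockwise order. -/
def IsCounterclockwise (p : Fin k → ℝ²) : Prop :=
  ∀ i j l, i < j → j < l → 0 < orientForm (p i) (p j) (p l)

lemma orientForm_apply (a b x : ℝ²) :
    orientForm a b x = (b 0 - a 0) * (x 1 - a 1) - (b 1 - a 1) * (x 0 - a 0) := by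
  simp [orientForm]
  ring

lemma orientForm_apply_left (a b : ℝ²) : orientForm a b a = 0 := by
  rw [orientForm_apply]
  ring

lemma orientForm_apply_right (a b : ℝ²) : orientForm a b b = 0 := by
  rw [orientForm_apply]
  ring

lemma orientForm_swap (a b x : ℝ²) : orientForm b a x = -orientForm a b x := by
  rw [orientForm_apply, orientForm_apply]
  ring

lemma orientForm_rotate (a b x : ℝ²) : orientForm b x a = orientForm a b x := by
  rw [orientForm_apply, orientForm_apply]
  ring

lemma orientForm_swap_right (a b x : ℝ²) : orientForm a x b = -orientForm a b x := by
  rw [orientForm_apply, orientForm_apply]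
  ring

lemma sum_orientForm (a b c x : ℝ²) :
    orientForm b c x + orientForm c a x + orientForm a b x = orientForm a b c := by
  simp only [orientForm_apply]
  ring

lemma sum_orientForm_smul (a b c x : ℝ²) :
    orientForm b c x • a + orientForm c a x • b + orientForm a b x • c = orientForm a b c • x := by
  ext n
  fin_cases n <;>
  · simp only [orientForm_apply, PiLp.add_apply, PiLp.smul_apply, smul_eq_mul,
      Fin.isValue, Fin.zero_eta, Fin.mk_one]
    ring

lemma mem_convexHull_triple (habc : 0 < orientForm a b c) (ha : 0 ≤ orientForm b c x)
    (hb : 0 ≤ orientForm c a x) (hc : 0 ≤ orientForm a b x) : x ∈ convexHull ℝ {a, b, c} := by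
  have hx : x = ∑ n, ![orientForm b c x / orientForm a b c, orientForm c a x / orientForm a b c,
      orientForm a b x / orientForm a b c] n • ![a, b, c] n := by
    simp only [Fin.sum_univ_three, Matrix.cons_val, div_eq_inv_mul, mul_smul, ← smul_add,
      sum_orientForm_smul, inv_smul_smul₀ habc.ne']
  rw [hx]
  refine (convex_convexHull ℝ {a, b, c}).sum_mem ?_ ?_ ?_
  · simpa [Fin.forall_fin_succ] using
      ⟨div_nonneg ha habc.le, div_nonneg hb habc.le, div_nonneg hc habc.le⟩
  · simp only [Fin.sum_univ_three, Matrix.cons_val]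
    rw [← add_div, ← add_div, sum_orientForm, div_self habc.ne']
  · exact fun n _ ↦ subset_convexHull ℝ _ (by fin_cases n <;> simp)

lemma lineThrough_eq_range (a b : ℝ²) :
    lineThrough a b = range (AffineMap.lineMap (k := ℝ) a b) := by
  ext x
  simp only [lineThrough, mem_ofPred_eq, mem_range, AffineMap.lineMap_apply_module',
    add_comm a, eq_comm]

lemma mem_lineThrough_iff (hab : a ≠ b) : x ∈ lineThrough a b ↔ orientForm a b x = 0 := by
  constructor
  · rw [lineThrough_eq_range]
    rintro ⟨t, rfl⟩
    rw [AffineMap.apply_lineMap, orientForm_apply_left, orientForm_apply_right,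
      AffineMap.lineMap_same_apply]
  · intro h
    rw [orientForm_apply] at h
    have hN : (b 0 - a 0) ^ 2 + (b 1 - a 1) ^ 2 ≠ 0 := by
      contrapose! hab
      rw [add_eq_zero_iff_of_nonneg (sq_nonneg _) (sq_nonneg _), sq_eq_zero_iff, sq_eq_zero_iff,
        sub_eq_zero, sub_eq_zero] at hab
      ext n
      fin_cases n
      exacts [hab.1.symm, hab.2.symm]
    refine ⟨((x 0 - a 0) * (b 0 - a 0) + (x 1 - a 1) * (b 1 - a 1)) /
      ((b 0 - a 0) ^ 2 + (b 1 - a 1) ^ 2), ?_⟩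
    ext n
    fin_cases n <;> simp only [PiLp.add_apply, PiLp.smul_apply, PiLp.sub_apply, smul_eq_mul,
      Fin.zero_eta, Fin.mk_one, Fin.isValue] <;> field_simp
    · linear_combination -(b 1 - a 1) * h
    · linear_combination (b 0 - a 0) * h

lemma not_wbtw_of_convexIndependent (hp : ConvexIndependent ℝ p) (hij : j ≠ i) (hjl : j ≠ l) :
    ¬Wbtw ℝ (p i) (p j) (p l) := by
  intro h
  have hj : p j ∈ convexHull ℝ (p '' {i, l}) := by
    rw [image_pair, convexHull_pair]
    exact h.mem_segment
  exact (hp _ j hj).elim hij hjl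

lemma orientForm_ne_zero_of_convexIndependent (hp : ConvexIndependent ℝ p) (hij : i ≠ j)
    (hjl : j ≠ l) (hil : i ≠ l) : orientForm (p i) (p j) (p l) ≠ 0 := by
  rw [ne_eq, ← mem_lineThrough_iff (hp.injective.ne hij), lineThrough_eq_range]
  rintro ⟨t, ht⟩
  have hcol := collinear_insert_of_mem_affineSpan_pair
    (ht ▸ AffineMap.lineMap_mem_affineSpan_pair t (p i) (p j))
  rcases hcol.wbtw_or_wbtw_or_wbtw with h | h | h
  · exact not_wbtw_of_convexIndependent hp hil hij h
  · exact not_wbtw_of_convexIndependent hp hij.symm hjl h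
  · exact not_wbtw_of_convexIndependent hp hjl.symm hil.symm h

lemma exists_equiv_fin_of_isStrictTotalOrder {α : Type*} [Fintype α] (r : α → α → Prop)
    [IsStrictTotalOrder α r] {k : ℕ} (h : Fintype.card α = k) :
    ∃ e : Fin k ≃ α, ∀ i j, i < j → r (e i) (e j) := by
  classical
  let := linearOrderOfSTO r
  exact ⟨(monoEquivOfFin α h).toEquiv, fun i j hij ↦ (monoEquivOfFin α h).strictMono hij⟩

lemma orientForm_neg_of_convexIndependent {m : Fin k} (hp : ConvexIndependent ℝ p) (hmi : m ≠ i)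
    (hmj : m ≠ j) (hml : m ≠ l) (hpos : 0 < orientForm (p i) (p j) (p l))
    (hi : 0 ≤ orientForm (p j) (p l) (p m)) (hj : 0 ≤ orientForm (p l) (p i) (p m)) :
    orientForm (p i) (p j) (p m) < 0 := by
  by_contra! hl
  have hm : p m ∈ convexHull ℝ (p '' {i, j, l}) := by
    simpa only [image_insert_eq, image_singleton] using mem_convexHull_triple hpos hi hj hl
  rcases hp _ m hm with h | h | h
  exacts [hmi h, hmj h, hml h]

/-- `i` comes before `j` in counterclockwise order seen from the base point `b`, which is first. -/
def AngularLT (p : Fin k → ℝ²) (b i j : Fin k) : Prop :=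
  j ≠ b ∧ (i = b ∨ 0 < orientForm (p b) (p i) (p j))

lemma isStrictTotalOrder_angularLT (hp : ConvexIndependent ℝ p) (b : Fin k) :
    IsStrictTotalOrder (Fin k) (AngularLT p b) where
  irrefl i h := by
    rcases h.2 with hi | hi
    · exact h.1 hi
    · exact hi.ne' (orientForm_apply_right _ _)
  trichotomous i j hij hji := by
    by_contra! hne
    have hi : i ≠ b := fun hi ↦ hij ⟨fun hj ↦ hne (hi.trans hj.symm), .inl hi⟩
    have hj : j ≠ b := fun hj ↦ hji ⟨hi, .inl hj⟩
    have hneg : ¬0 < orientForm (p b) (p i) (p j) := fun h ↦ hij ⟨hj, .inr h⟩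
    have hpos : ¬0 < -orientForm (p b) (p i) (p j) := fun h ↦
      hji ⟨hi, .inr (by rwa [orientForm_swap_right])⟩
    exact orientForm_ne_zero_of_convexIndependent hp hi.symm hne hj.symm (by linarith)
  trans i j l := by
    rintro ⟨hj, hij⟩ ⟨hl, hjl⟩
    have hjl := hjl.resolve_left hj
    refine ⟨hl, hij.imp_right fun hij ↦ ?_⟩
    have hi : i ≠ b := by
      rintro rfl
      rw [← orientForm_rotate, orientForm_apply_left] at hij
      exact hij.false
    by_contra! hil
    have hli : 0 ≤ orientForm (p l) (p i) (p b) := by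
      rwa [orientForm_rotate, orientForm_swap_right, neg_nonneg]
    have hijb : 0 < orientForm (p i) (p j) (p b) := by rwa [orientForm_rotate]
    have hjlb : 0 < orientForm (p j) (p l) (p b) := by rwa [orientForm_rotate]
    refine hijb.not_gt
      (orientForm_neg_of_convexIndependent hp hi.symm hj.symm hl.symm ?_ hjlb.le hli)
    rw [← sum_orientForm _ _ _ (p b)]
    positivity

lemma exists_perm_isCounterclockwise (hp : ConvexIndependent ℝ p) :
    ∃ σ : Equiv.Perm (Fin k), IsCounterclockwise (p ∘ σ) := by
  rcases k with _ | k
  · exact ⟨1, fun i ↦ i.elim0⟩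
  have := isStrictTotalOrder_angularLT hp 0
  obtain ⟨σ, hσ⟩ := exists_equiv_fin_of_isStrictTotalOrder (AngularLT p 0) (Fintype.card_fin _)
  refine ⟨σ, fun i j l hij hjl ↦ ?_⟩
  change 0 < orientForm (p (σ i)) (p (σ j)) (p (σ l))
  obtain ⟨hj, hij'⟩ := hσ i j hij
  obtain ⟨-, hjl'⟩ := hσ j l hjl
  have hil := (hσ i l (hij.trans hjl)).2
  have h₀jl := hjl'.resolve_left hj
  rcases eq_or_ne (σ i) 0 with hi | hi
  · rwa [hi]
  have h₀ij := hij'.resolve_left hi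
  by_contra! hneg
  refine h₀ij.not_gt (orientForm_neg_of_convexIndependent hp hj (σ.injective.ne hij.ne')
    (σ.injective.ne hjl.ne) (hil.resolve_left hi) ?_ ?_)
  · rwa [orientForm_swap_right, neg_nonneg]
  · rw [orientForm_rotate, orientForm_rotate]
    exact h₀jl.le

end Orientation

section Chords

variable {k : ℕ} {p : Fin k → ℝ²} {i j l : Fin k} {q m n : Fin k × Fin k} {x : ℝ²}

/-- The chords of a `k`-gon (its sides and diagonals), as ordered pairs of vertex indices. -/
def chords (k : ℕ) : Finset (Fin k × Fin k) :=
  {q | q.1 < q.2}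

/-- The side of a `k`-gon from the vertex `l` to the next one. -/
def sideAt (l : Fin k) : Fin k × Fin k :=
  if h : (l : ℕ) + 1 < k then (l, ⟨l + 1, h⟩) else (⟨0, l.pos⟩, l)

/-- The sides of a `k`-gon. -/
def sides (k : ℕ) : Finset (Fin k × Fin k) :=
  Finset.univ.image sideAt

/-- The end points of `q` and `m` alternate around the polygon, starting with one of `q`; for
chords of a convex polygon this says that they cross. -/
def Crosses (q m : Fin k × Fin k) : Prop :=
  q.1 < m.1 ∧ m.1 < q.2 ∧ q.2 < m.2

lemma mem_chords : q ∈ chords k ↔ q.1 < q.2 := by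
  simp only [chords, Finset.mem_filter_univ]

lemma mem_sides :
    q ∈ sides k ↔ (q.1 : ℕ) + 1 = q.2 ∨ (q.1 : ℕ) = 0 ∧ (q.2 : ℕ) + 1 = k := by
  simp only [sides, Finset.mem_image, Finset.mem_univ, true_and, sideAt]
  constructor
  · rintro ⟨l, rfl⟩
    split_ifs with h
    · exact .inl rfl
    · exact .inr ⟨rfl, by dsimp only; omega⟩
  · obtain ⟨i, j⟩ := q
    rintro (h | ⟨hi, hj⟩)
    · refine ⟨i, ?_⟩
      rw [dif_pos (by grind), Prod.mk.injEq, Fin.ext_iff (b := j)]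
      exact ⟨rfl, h⟩
    · refine ⟨j, ?_⟩
      rw [dif_neg (by grind), Prod.mk.injEq, Fin.ext_iff (b := i)]
      exact ⟨hi.symm, rfl⟩

lemma sides_subset_chords (hk : 2 ≤ k) : sides k ⊆ chords k := by
  intro q hq
  rw [mem_sides] at hq
  rw [mem_chords, Fin.lt_def]
  omega

lemma card_sides (hk : 3 ≤ k) : (sides k).card = k := by
  rw [sides, Finset.card_image_of_injective, Finset.card_univ, Fintype.card_fin]
  intro i j h
  simp only [sideAt] at h
  grind

lemma exists_mem_sides_ne (hk : 3 ≤ k) (q : Fin k × Fin k) (l : Fin k) :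
    ∃ n ∈ sides k, n ≠ q ∧ (n.1 = l ∨ n.2 = l) := by
  obtain ⟨n, hn, n', hn', hne, hl, hl'⟩ : ∃ n ∈ sides k, ∃ n' ∈ sides k, n ≠ n' ∧
      (n.1 = l ∨ n.2 = l) ∧ (n'.1 = l ∨ n'.2 = l) := by
    rcases eq_or_ne (l : ℕ) 0 with h₀ | h₀
    · refine ⟨(l, ⟨1, by omega⟩), ?_, (l, ⟨k - 1, by omega⟩), ?_, ?_, .inl rfl, .inl rfl⟩ <;>
        grind [mem_sides]
    rcases eq_or_ne ((l : ℕ) + 1) k with h₁ | h₁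
    · refine ⟨(⟨0, by omega⟩, l), ?_, (⟨l - 1, by omega⟩, l), ?_, ?_, .inr rfl, .inr rfl⟩ <;>
        grind [mem_sides]
    · refine ⟨(⟨l - 1, by omega⟩, l), ?_, (l, ⟨l + 1, by omega⟩), ?_, ?_, .inr rfl, .inl rfl⟩ <;>
        grind [mem_sides]
  rcases eq_or_ne n q with rfl | h
  · exact ⟨n', hn', hne.symm, hl'⟩
  · exact ⟨n, hn, h, hl⟩

lemma Crosses.notMem_sides (h : Crosses q m) : q ∉ sides k ∧ m ∉ sides k := by
  simp only [mem_sides, Crosses, Fin.lt_def] at h ⊢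
  omega

/-- The affine form of the line through the end points of the chord `q`, oriented so that the
polygon lies on the nonnegative side of each side, which reverses the closing side. -/
def chordForm (p : Fin k → ℝ²) (q : Fin k × Fin k) : ℝ² →ᵃ[ℝ] ℝ :=
  if (q.1 : ℕ) = 0 ∧ (q.2 : ℕ) + 1 = k then orientForm (p q.2) (p q.1)
  else orientForm (p q.1) (p q.2)

/-- The interior of the polygon, as the intersection of the open half-planes of its sides. -/
def openPolygon (p : Fin k → ℝ²) : Set ℝ² :=
  signCell (chordForm p) (sides k) 1

lemma continuous_chordForm (p : Fin k → ℝ²) (q : Fin k × Fin k) : Continuous (chordForm p q) :=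
  (chordForm p q).continuous_of_finiteDimensional

lemma chordForm_apply_eq_zero : chordForm p q x = 0 ↔ orientForm (p q.1) (p q.2) x = 0 := by
  rw [chordForm]
  split_ifs
  · rw [orientForm_swap, neg_eq_zero]
  · rfl

lemma mem_openPolygon : x ∈ openPolygon p ↔ ∀ n ∈ sides k, 0 < chordForm p n x := by
  simp only [openPolygon, mem_signCell, Pi.one_apply, sign_eq_one_iff]

lemma isOpen_openPolygon (p : Fin k → ℝ²) : IsOpen (openPolygon p) := by
  have h : openPolygon p = ⋂ n ∈ sides k, {x | 0 < chordForm p n x} := by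
    ext x
    simp only [mem_openPolygon, mem_iInter, mem_ofPred_eq]
  rw [h]
  exact isOpen_biInter_finset fun n _ ↦ isOpen_lt continuous_const (continuous_chordForm p n)

namespace IsCounterclockwise

lemma orientForm_pos (hp : IsCounterclockwise p) (hij : i < j) (hl : l < i ∨ j < l) :
    0 < orientForm (p i) (p j) (p l) := by
  rcases hl with hl | hl
  · rw [orientForm_rotate]
    exact hp l i j hl hij
  · exact hp i j l hij hl

lemma orientForm_neg (hp : IsCounterclockwise p) (hil : i < l) (hlj : l < j) :
    orientForm (p i) (p j) (p l) < 0 := by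
  rw [orientForm_swap_right, neg_lt_zero]
  exact hp i l j hil hlj

lemma orientForm_nonneg (hp : IsCounterclockwise p) (hij : i < j) (hl : l ≤ i ∨ j ≤ l) :
    0 ≤ orientForm (p i) (p j) (p l) := by
  rcases eq_or_ne l i with rfl | hli
  · exact (orientForm_apply_left _ _).ge
  rcases eq_or_ne l j with rfl | hlj
  · exact (orientForm_apply_right _ _).ge
  · exact (hp.orientForm_pos hij (hl.imp hli.lt_of_le hlj.symm.lt_of_le)).le

lemma orientForm_nonpos (hp : IsCounterclockwise p) (hil : i ≤ l) (hlj : l ≤ j) :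
    orientForm (p i) (p j) (p l) ≤ 0 := by
  rcases eq_or_ne i l with rfl | hli
  · exact (orientForm_apply_left _ _).le
  rcases eq_or_ne l j with rfl | hlj'
  · exact (orientForm_apply_right _ _).le
  · exact (hp.orientForm_neg (hli.lt_of_le hil) (hlj'.lt_of_le hlj)).le

lemma chordForm_vertex_eq_zero (hp : IsCounterclockwise p) (hq : q ∈ chords k) :
    chordForm p q (p l) = 0 ↔ l = q.1 ∨ l = q.2 := by
  rw [mem_chords] at hq
  rw [chordForm_apply_eq_zero]
  refine ⟨fun h ↦ ?_, ?_⟩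
  · by_contra! hl
    rcases hl.1.lt_or_gt with h₁ | h₁
    · exact (hp.orientForm_pos hq (.inl h₁)).ne' h
    rcases hl.2.lt_or_gt with h₂ | h₂
    · exact (hp.orientForm_neg h₁ h₂).ne h
    · exact (hp.orientForm_pos hq (.inr h₂)).ne' h
  · rintro (rfl | rfl)
    exacts [orientForm_apply_left _ _, orientForm_apply_right _ _]

lemma chordForm_endpoints_ne_zero (hp : IsCounterclockwise p) (hq : q ∈ chords k)
    (hm : m ∈ chords k) (hqm : q ≠ m) :
    ¬(chordForm p m (p q.1) = 0 ∧ chordForm p m (p q.2) = 0) := by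
  rw [hp.chordForm_vertex_eq_zero hm, hp.chordForm_vertex_eq_zero hm]
  rw [mem_chords] at hq hm
  grind

lemma chordForm_vertex_nonneg (hp : IsCounterclockwise p) (hn : n ∈ sides k) (l : Fin k) :
    0 ≤ chordForm p n (p l) := by
  rw [mem_sides] at hn
  rw [chordForm]
  split_ifs with h
  · rw [orientForm_swap, neg_nonneg]
    exact hp.orientForm_nonpos (by grind) (by grind)
  · exact hp.orientForm_nonneg (by grind) (by grind)

lemma chordForm_nonneg_of_mem_convexHull (hp : IsCounterclockwise p) (hn : n ∈ sides k)
    (hx : x ∈ convexHull ℝ (range p)) : 0 ≤ chordForm p n x := by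
  have hconv : Convex ℝ (chordForm p n ⁻¹' Ici 0) := (convex_Ici 0).affine_preimage _
  refine convexHull_min ?_ hconv hx
  rintro _ ⟨l, rfl⟩
  exact hp.chordForm_vertex_nonneg hn l

lemma chordForm_pos_of_mem_openSegment (hp : IsCounterclockwise p) (hk : 2 ≤ k)
    (hq : q ∈ chords k) (hn : n ∈ sides k) (hqn : q ≠ n) (hx : x ∈ openSegment ℝ (p q.1) (p q.2)) :
    0 < chordForm p n x := by
  have h₁ := hp.chordForm_vertex_nonneg hn q.1
  have h₂ := hp.chordForm_vertex_nonneg hn q.2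
  have hne := hp.chordForm_endpoints_ne_zero hq (sides_subset_chords hk hn) hqn
  obtain ⟨a, b, ha, hb, hab, rfl⟩ := hx
  rw [Convex.combo_affine_apply hab, smul_eq_mul, smul_eq_mul]
  rcases h₁.eq_or_lt with h | h
  · have := h₂.lt_of_ne fun h' ↦ hne ⟨h.symm, h'.symm⟩
    positivity
  · positivity

lemma chordForm_ne_zero_of_not_crosses (hp : IsCounterclockwise p) (hq : q ∈ chords k)
    (hm : m ∈ chords k) (hqm : q ≠ m) (h : ¬Crosses q m) (h' : ¬Crosses m q)
    (hx : x ∈ openSegment ℝ (p q.1) (p q.2)) : chordForm p m x ≠ 0 := by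
  have hne := hp.chordForm_endpoints_ne_zero hq hm hqm
  rw [chordForm_apply_eq_zero, chordForm_apply_eq_zero] at hne
  rw [ne_eq, chordForm_apply_eq_zero]
  rw [mem_chords] at hq hm
  obtain ⟨a, b, ha, hb, hab, rfl⟩ := hx
  rw [Convex.combo_affine_apply hab, smul_eq_mul, smul_eq_mul]
  have hsides : (q.1 ≤ m.1 ∨ m.2 ≤ q.1) ∧ (q.2 ≤ m.1 ∨ m.2 ≤ q.2) ∨
      (m.1 ≤ q.1 ∧ q.1 ≤ m.2) ∧ (m.1 ≤ q.2 ∧ q.2 ≤ m.2) := by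
    grind [Crosses]
  have hcombo {c d : ℝ} (hc : 0 ≤ c) (hd : 0 ≤ d) (h₀ : a * c + b * d = 0) : c = 0 ∧ d = 0 := by
    rw [add_eq_zero_iff_of_nonneg (by positivity) (by positivity)] at h₀
    simpa only [mul_eq_zero, ha.ne', hb.ne', false_or] using h₀
  intro h₀
  rcases hsides with ⟨h₁, h₂⟩ | ⟨h₁, h₂⟩
  · exact hne (hcombo (hp.orientForm_nonneg hm h₁) (hp.orientForm_nonneg hm h₂) h₀)
  · have := hcombo (neg_nonneg.2 (hp.orientForm_nonpos h₁.1 h₁.2))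
      (neg_nonneg.2 (hp.orientForm_nonpos h₂.1 h₂.2)) (by linarith)
    exact hne (this.imp neg_eq_zero.1 neg_eq_zero.1)

lemma vertex_ne (hp : IsCounterclockwise p) (hk : 3 ≤ k) (hq : q ∈ chords k) :
    p q.1 ≠ p q.2 := by
  intro h
  obtain ⟨n, hn, hnq, hl⟩ := exists_mem_sides_ne hk q q.1
  have hn' := sides_subset_chords (by omega) hn
  have h₀ : chordForm p n (p q.1) = 0 :=
    (hp.chordForm_vertex_eq_zero hn').2 (hl.imp Eq.symm Eq.symm)
  exact hp.chordForm_endpoints_ne_zero hq hn' hnq.symm ⟨h₀, h ▸ h₀⟩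

lemma exists_mem_sides_vertex_eq_zero (hp : IsCounterclockwise p) (hk : 3 ≤ k)
    (q : Fin k × Fin k) (l : Fin k) :
    ∃ n ∈ sides k, n ≠ q ∧ chordForm p n (p l) = 0 := by
  obtain ⟨n, hn, hnq, hl⟩ := exists_mem_sides_ne hk q l
  exact ⟨n, hn, hnq, (hp.chordForm_vertex_eq_zero (sides_subset_chords (by omega) hn)).2
    (hl.imp Eq.symm Eq.symm)⟩

lemma mem_openSegment_of_chordForm_eq_zero (hp : IsCounterclockwise p) (hk : 3 ≤ k)
    (hq : q ∈ chords k) (hqx : chordForm p q x = 0)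
    (hx : ∀ n ∈ sides k, n ≠ q → 0 < chordForm p n x) : x ∈ openSegment ℝ (p q.1) (p q.2) := by
  rw [chordForm_apply_eq_zero, ← mem_lineThrough_iff (hp.vertex_ne hk hq),
    lineThrough_eq_range] at hqx
  obtain ⟨t, rfl⟩ := hqx
  simp only [AffineMap.apply_lineMap, AffineMap.lineMap_apply_ring] at hx
  obtain ⟨n₁, hn₁, hne₁, hz₁⟩ := hp.exists_mem_sides_vertex_eq_zero hk q q.1
  obtain ⟨n₂, hn₂, hne₂, hz₂⟩ := hp.exists_mem_sides_vertex_eq_zero hk q q.2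
  have h₁ := hx n₁ hn₁ hne₁
  have h₂ := hx n₂ hn₂ hne₂
  rw [hz₁, mul_zero, zero_add] at h₁
  rw [hz₂, mul_zero, add_zero] at h₂
  rw [openSegment_eq_image_lineMap]
  exact ⟨t, ⟨pos_of_mul_pos_left h₁ (hp.chordForm_vertex_nonneg hn₁ _),
    sub_pos.1 (pos_of_mul_pos_left h₂ (hp.chordForm_vertex_nonneg hn₂ _))⟩, rfl⟩

lemma chordForm_eq_zero_of_mem_openSegment (hp : IsCounterclockwise p) (hq : q ∈ chords k)
    (hx : x ∈ openSegment ℝ (p q.1) (p q.2)) : chordForm p q x = 0 := by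
  obtain ⟨a, b, -, -, hab, rfl⟩ := hx
  rw [Convex.combo_affine_apply hab, (hp.chordForm_vertex_eq_zero hq).2 (.inl rfl),
    (hp.chordForm_vertex_eq_zero hq).2 (.inr rfl), smul_zero, smul_zero, add_zero]

lemma openSegment_subset_openPolygon (hp : IsCounterclockwise p) (hk : 2 ≤ k)
    (hq : q ∈ chords k) (hqs : q ∉ sides k) : openSegment ℝ (p q.1) (p q.2) ⊆ openPolygon p :=
  fun _ hx ↦ mem_openPolygon.2 fun _ hn ↦
    hp.chordForm_pos_of_mem_openSegment hk hq hn (ne_of_mem_of_not_mem hn hqs).symm hx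

lemma openFacet_eq_openSegment (hp : IsCounterclockwise p) (hk : 3 ≤ k) (hq : q ∈ sides k) :
    openFacet (chordForm p) (sides k) q = openSegment ℝ (p q.1) (p q.2) := by
  have hk' : 2 ≤ k := by omega
  have hq' := sides_subset_chords hk' hq
  ext x
  simp only [openFacet, mem_inter_iff, mem_signRegion, sign_eq_zero_iff, mem_signCell,
    Finset.mem_erase, and_imp, Pi.one_apply, sign_eq_one_iff]
  exact ⟨fun h ↦ hp.mem_openSegment_of_chordForm_eq_zero hk hq' h.1 fun n hn hnq ↦ h.2 n hnq hn,
    fun h ↦ ⟨hp.chordForm_eq_zero_of_mem_openSegment hq' h, fun n hnq hn ↦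
      hp.chordForm_pos_of_mem_openSegment hk' hq' hn hnq.symm h⟩⟩

lemma openFacet_subset_freeSet (hp : IsCounterclockwise p) (hk : 3 ≤ k) (hq : q ∈ sides k) :
    openFacet (chordForm p) (sides k) q ⊆ freeSet (chordForm p) ((chords k).erase q) := by
  rw [hp.openFacet_eq_openSegment hk hq]
  intro x hx m hm
  rw [Finset.mem_erase] at hm
  exact hp.chordForm_ne_zero_of_not_crosses (sides_subset_chords (by omega) hq) hm.2 hm.1.symm
    (fun h ↦ h.notMem_sides.1 hq) (fun h ↦ h.notMem_sides.2 hq) hx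

lemma exists_mem_openPolygon_of_crosses (hp : IsCounterclockwise p) (hk : 2 ≤ k)
    (h : Crosses q m) : ∃ x ∈ openPolygon p, chordForm p q x = 0 ∧ chordForm p m x = 0 := by
  have hqs := h.notMem_sides.1
  obtain ⟨h₁, h₂, h₃⟩ := h
  have hq : q ∈ chords k := mem_chords.2 (h₁.trans h₂)
  have hpos : 0 < orientForm (p m.1) (p m.2) (p q.1) :=
    hp.orientForm_pos (h₂.trans h₃) (.inl h₁)
  have hneg : orientForm (p m.1) (p m.2) (p q.2) < 0 := hp.orientForm_neg h₂ h₃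
  obtain ⟨x, hx, hx₀⟩ := exists_mem_segment_apply_eq_zero _ hneg.le hpos.le
  have hxq : x ∈ openSegment ℝ (p q.1) (p q.2) := by
    rw [openSegment_symm]
    refine mem_openSegment_of_ne_left_right ?_ ?_ hx
    · rintro rfl
      exact hneg.ne hx₀
    · rintro rfl
      exact hpos.ne' hx₀
  exact ⟨x, hp.openSegment_subset_openPolygon hk hq hqs hxq,
    hp.chordForm_eq_zero_of_mem_openSegment hq hxq, chordForm_apply_eq_zero.2 hx₀⟩

lemma crosses_or_crosses (hp : IsCounterclockwise p) (hk : 3 ≤ k) (hq : q ∈ chords k)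
    (hm : m ∈ chords k) (hqm : q ≠ m) (hx : x ∈ openPolygon p) (hqx : chordForm p q x = 0)
    (hmx : chordForm p m x = 0) : Crosses q m ∨ Crosses m q := by
  by_contra! h
  exact hp.chordForm_ne_zero_of_not_crosses hq hm hqm h.1 h.2
    (hp.mem_openSegment_of_chordForm_eq_zero hk hq hqx fun n hn _ ↦ mem_openPolygon.1 hx n hn) hmx

/-- Fan triangulation from the first vertex `i`: moving along the vertices `j`, the point `x` stays
to the left of the ray from `p i` to `p j` until it is caught in a triangle. -/
lemma orientForm_pos_or_mem_convexHull (hp : IsCounterclockwise p) (hk : 3 ≤ k)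
    (hx : x ∈ openPolygon p) (hi : (i : ℕ) = 0) (hij : i < j) :
    0 < orientForm (p i) (p j) x ∨ x ∈ convexHull ℝ (range p) := by
  have hside {j l : Fin k} (hjl : (j : ℕ) + 1 = l) : 0 < orientForm (p j) (p l) x := by
    have h := mem_openPolygon.1 hx (j, l) (mem_sides.2 (.inl hjl))
    rwa [chordForm, if_neg (by dsimp only; omega)] at h
  suffices h : ∀ n (hn : n < k), 1 ≤ n →
      0 < orientForm (p i) (p ⟨n, hn⟩) x ∨ x ∈ convexHull ℝ (range p) from h j j.2 (by grind)
  intro n hn h₁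
  induction n, h₁ using Nat.le_induction with
  | base => exact .inl (hside (by simp [hi]))
  | succ n h₁ ih =>
    refine (ih (by omega)).elim (fun hpos ↦ ?_) .inr
    refine or_iff_not_imp_left.2 fun hneg ↦ ?_
    set j : Fin k := ⟨n, by omega⟩
    set l : Fin k := ⟨n + 1, hn⟩
    have hmem : x ∈ convexHull ℝ {p i, p j, p l} := by
      refine mem_convexHull_triple (hp i j l (by grind) (by grind)) (hside rfl).le ?_ hpos.le
      rwa [orientForm_swap, neg_nonneg, ← not_lt]
    refine convexHull_mono ?_ hmem
    simp only [insert_subset_iff, singleton_subset_iff, mem_range_self, and_self]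

lemma openPolygon_subset_convexHull (hp : IsCounterclockwise p) (hk : 3 ≤ k) :
    openPolygon p ⊆ convexHull ℝ (range p) := by
  intro x hx
  have hlt : (⟨0, by omega⟩ : Fin k) < ⟨k - 1, by omega⟩ := by
    rw [Fin.mk_lt_mk]
    omega
  refine (hp.orientForm_pos_or_mem_convexHull hk hx rfl hlt).resolve_left fun h ↦ ?_
  have hclosing := mem_openPolygon.1 hx (⟨0, by omega⟩, ⟨k - 1, by omega⟩)
    (mem_sides.2 (.inr ⟨rfl, by dsimp only; omega⟩))
  rw [chordForm, if_pos ⟨rfl, by dsimp only; omega⟩, orientForm_swap] at hclosing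
  linarith

lemma openPolygon_nonempty (hp : IsCounterclockwise p) (hk : 3 ≤ k) : (openPolygon p).Nonempty := by
  have hk' : 2 ≤ k := by omega
  set q : Fin k × Fin k := (⟨0, by omega⟩, ⟨1, by omega⟩) with hq_def
  have hq : q ∈ chords k := mem_chords.2 (by simp [hq_def])
  set y := midpoint ℝ (p q.1) (p q.2)
  have hy : y ∈ openSegment ℝ (p q.1) (p q.2) := midpoint_mem_openSegment ..
  refine ⟨midpoint ℝ y (p ⟨2, by omega⟩), mem_openPolygon.2 fun n hn ↦ ?_⟩
  have h₂ := hp.chordForm_vertex_nonneg hn ⟨2, by omega⟩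
  rw [AffineMap.map_midpoint, midpoint_eq_smul_add, invOf_eq_inv, smul_eq_mul]
  rcases eq_or_ne q n with rfl | hqn
  · have h₂' := (hp.chordForm_vertex_eq_zero (l := ⟨2, by omega⟩) hq).not.2 (by simp [hq_def])
    have := h₂.lt_of_ne' h₂'
    rw [hp.chordForm_eq_zero_of_mem_openSegment hq hy]
    positivity
  · have := hp.chordForm_pos_of_mem_openSegment hk' hq hn hqn hy
    positivity

end IsCounterclockwise

end Chords

section Counting

variable {k : ℕ} {p : Fin k → ℝ²} {q m : Fin k × Fin k}

/-- No three chords of the polygon meet inside it. -/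
def NoThreeConcurrent (p : Fin k → ℝ²) : Prop :=
  ∀ x ∈ openPolygon p, ∀ s ⊆ chords k, (∀ q ∈ s, chordForm p q x = 0) → s.card ≤ 2

/-- The two crossing diagonals of the quadrilateral with vertices `g 0 < g 1 < g 2 < g 3`. -/
def crossingPair (g : Fin 4 ↪o Fin k) : Finset (Fin k × Fin k) :=
  {(g 0, g 2), (g 1, g 3)}

lemma encard_range_of_injective_orderEmbedding {α : Type*} {n : ℕ} {φ : (Fin n ↪o Fin k) → α}
    (hφ : Function.Injective φ) : (range φ).encard = k.choose n := by
  rw [← image_univ, hφ.encard_image, encard_univ,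
    ENat.card_congr Set.powersetCard.ofFinEmbEquiv, ENat.card_eq_coe_natCard,
    Set.powersetCard.card, Nat.card_eq_fintype_card, Fintype.card_fin]

lemma card_chords : (chords k).card = k.choose 2 := by
  have hrange : (chords k : Set (Fin k × Fin k)) = range fun g : Fin 2 ↪o Fin k ↦ (g 0, g 1) := by
    ext ⟨i, j⟩
    rw [Finset.mem_coe, mem_chords]
    constructor
    · intro h
      exact ⟨OrderEmbedding.ofStrictMono ![i, j]
        (by simpa [Fin.strictMono_iff_lt_succ] using h), rfl⟩
    · rintro ⟨g, hg⟩
      cases hg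
      exact g.strictMono (by decide)
  have hinj : Function.Injective fun g : Fin 2 ↪o Fin k ↦ (g 0, g 1) := by
    intro g h hgh
    ext n
    fin_cases n <;> grind
  have hcard := encard_range_of_injective_orderEmbedding hinj
  rw [← hrange, encard_coe_eq_coe_finsetCard] at hcard
  exact_mod_cast hcard

lemma crosses_orderEmbedding (g : Fin 4 ↪o Fin k) : Crosses (g 0, g 2) (g 1, g 3) :=
  ⟨g.strictMono (by decide), g.strictMono (by decide), g.strictMono (by decide)⟩

lemma card_crossingPair (g : Fin 4 ↪o Fin k) : (crossingPair g).card = 2 :=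
  Finset.card_pair fun h ↦ (crosses_orderEmbedding g).1.ne (congrArg Prod.fst h)

lemma Crosses.exists_crossingPair_eq (h : Crosses q m) :
    ∃ g : Fin 4 ↪o Fin k, crossingPair g = {q, m} :=
  ⟨OrderEmbedding.ofStrictMono ![q.1, m.1, q.2, m.2]
    (by simpa [Fin.strictMono_iff_lt_succ, Fin.forall_fin_succ, Crosses] using h), rfl⟩

lemma crossingPair_injective : Function.Injective (crossingPair (k := k)) := by
  intro g h hgh
  have hpair := congrArg (fun s : Finset (Fin k × Fin k) ↦ (s : Set (Fin k × Fin k))) hgh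
  simp only [crossingPair, Finset.coe_pair, pair_eq_pair_iff, Prod.mk.injEq] at hpair
  rcases hpair with ⟨⟨h₀, h₂⟩, h₁, h₃⟩ | ⟨⟨h₀, -⟩, h₁, -⟩
  · ext n
    fin_cases n <;> grind
  · have hg := (crosses_orderEmbedding g).1
    have hh := (crosses_orderEmbedding h).1
    grind

namespace IsCounterclockwise

lemma isSimpleOn_openPolygon (hp : IsCounterclockwise p) (hk : 3 ≤ k) (hgen : NoThreeConcurrent p) :
    IsSimpleOn (chordForm p) (chords k) (openPolygon p) := by
  intro s hs q hq hqs z hz hzs hzq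
  have hcard : s.card ≤ 1 := by
    have := hgen z hz (insert q s) (Finset.insert_subset hq hs)
      ((Finset.forall_mem_insert _ _ _).2 ⟨hzq, hzs⟩)
    rw [Finset.card_insert_of_notMem hqs] at this
    omega
  obtain ⟨l, hls, hlq⟩ : ∃ l, (∀ m ∈ s, chordForm p m (p l) = 0) ∧ chordForm p q (p l) ≠ 0 := by
    interval_cases hs₀ : s.card
    · obtain ⟨l, -, hl⟩ := Finset.exists_mem_notMem_of_card_lt_card (s := {q.1, q.2})
        (t := Finset.univ) (Finset.card_le_two.trans_lt (by rwa [Finset.card_fin]))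
      refine ⟨l, ?_, ?_⟩
      · simp [Finset.card_eq_zero.1 hs₀]
      · simpa only [ne_eq, hp.chordForm_vertex_eq_zero hq, Finset.mem_insert,
          Finset.mem_singleton] using hl
    · obtain ⟨m, rfl⟩ := Finset.card_eq_one.1 hs₀
      rw [Finset.mem_singleton] at hqs
      rw [Finset.singleton_subset_iff] at hs
      simp only [Finset.mem_singleton, forall_eq, hp.chordForm_vertex_eq_zero hs]
      rcases not_and_or.1 (hp.chordForm_endpoints_ne_zero hs hq (Ne.symm hqs)) with h | h
      · exact ⟨m.1, .inl rfl, h⟩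
      · exact ⟨m.2, .inr rfl, h⟩
  have hnhds : openPolygon p ∈ 𝓝 (AffineMap.lineMap z (p l) (0 : ℝ)) := by
    rw [AffineMap.lineMap_apply_zero]
    exact (isOpen_openPolygon p).mem_nhds hz
  exact ⟨p l, hls, hlq, AffineMap.lineMap_continuous.continuousAt hnhds⟩

lemma flatsMeeting_openPolygon (hp : IsCounterclockwise p) (hk : 3 ≤ k)
    (hgen : NoThreeConcurrent p) :
    flatsMeeting (chordForm p) (chords k) (openPolygon p) =
      {∅} ∪ singleton '' (chords k \ sides k : Finset (Fin k × Fin k)) ∪ range crossingPair := by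
  ext s
  simp only [mem_union, mem_singleton_iff, mem_image, Finset.mem_coe, Finset.mem_sdiff, mem_range]
  constructor
  · rintro ⟨hs, x, hx, hsx⟩
    have hcard := hgen x hx s hs hsx
    interval_cases hs₀ : s.card
    · exact .inl (.inl (Finset.card_eq_zero.1 hs₀))
    · obtain ⟨q, rfl⟩ := Finset.card_eq_one.1 hs₀
      rw [Finset.singleton_subset_iff] at hs
      simp only [Finset.mem_singleton, forall_eq] at hsx
      exact .inl (.inr ⟨q, ⟨hs, fun hq ↦ (mem_openPolygon.1 hx q hq).ne' hsx⟩, rfl⟩)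
    · obtain ⟨q, m, hqm, rfl⟩ := Finset.card_eq_two.1 hs₀
      simp only [Finset.insert_subset_iff, Finset.singleton_subset_iff] at hs
      simp only [Finset.forall_mem_insert, Finset.mem_singleton, forall_eq] at hsx
      rcases hp.crosses_or_crosses hk hs.1 hs.2 hqm hx hsx.1 hsx.2 with h | h
      · exact .inr h.exists_crossingPair_eq
      · exact .inr (Finset.pair_comm q m ▸ h.exists_crossingPair_eq)
  · rintro ((rfl | ⟨q, ⟨hq, hqs⟩, rfl⟩) | ⟨g, rfl⟩)
    · obtain ⟨x, hx⟩ := hp.openPolygon_nonempty hk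
      exact ⟨Finset.empty_subset _, x, hx, by simp⟩
    · have hmid := midpoint_mem_openSegment (𝕜 := ℝ) (p q.1) (p q.2)
      exact ⟨Finset.singleton_subset_iff.2 hq, _,
        hp.openSegment_subset_openPolygon (by omega) hq hqs hmid,
        by simpa using hp.chordForm_eq_zero_of_mem_openSegment hq hmid⟩
    · obtain ⟨x, hx, h₁, h₂⟩ :=
        hp.exists_mem_openPolygon_of_crosses (by omega) (crosses_orderEmbedding g)
      refine ⟨?_, x, hx, ?_⟩
      · simp only [crossingPair, Finset.insert_subset_iff, Finset.singleton_subset_iff, mem_chords]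
        exact ⟨g.strictMono (by decide), g.strictMono (by decide)⟩
      · simp only [crossingPair, Finset.forall_mem_insert, Finset.mem_singleton, forall_eq]
        exact ⟨h₁, h₂⟩

lemma encard_flatsMeeting_openPolygon (hp : IsCounterclockwise p) (hk : 3 ≤ k)
    (hgen : NoThreeConcurrent p) :
    (flatsMeeting (chordForm p) (chords k) (openPolygon p)).encard =
      (k.choose 4 + k.choose 2 - k + 1 : ℕ) := by
  have hsides := sides_subset_chords (show 2 ≤ k by omega)
  have hdiag : (singleton '' ((chords k \ sides k : Finset (Fin k × Fin k)) :
      Set (Fin k × Fin k)) : Set (Finset (Fin k × Fin k))).encard = (k.choose 2 - k : ℕ) := by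
    rw [Finset.singleton_injective.encard_image, encard_coe_eq_coe_finsetCard,
      Finset.card_sdiff_of_subset hsides, card_chords, card_sides hk]
  have hle : k ≤ k.choose 2 := by
    simpa only [card_chords, card_sides hk] using Finset.card_le_card hsides
  rw [hp.flatsMeeting_openPolygon hk hgen, encard_union_eq, encard_union_eq, encard_singleton,
    hdiag, encard_range_of_injective_orderEmbedding crossingPair_injective]
  · norm_cast
    omega
  · simp
  · rw [Set.disjoint_left]
    rintro _ h ⟨g, rfl⟩
    have hcard : (crossingPair g).card ≤ 1 := by
      rcases h with h | ⟨q, -, h⟩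
      · simp [mem_singleton_iff.1 h]
      · simp [← h]
    rw [card_crossingPair] at hcard
    omega

end IsCounterclockwise

end Counting

section Chambers

variable {k : ℕ} {p : Fin k → ℝ²} {q : Fin k × Fin k} {x : ℝ²}

/-- The line of the arrangement spanned by the chord `q`. -/
def chordLine (p : Fin k → ℝ²) (q : Fin k × Fin k) : Set ℝ² :=
  lineThrough (p q.1) (p q.2)

lemma lineThrough_comm (a b : ℝ²) : lineThrough a b = lineThrough b a := by
  rw [lineThrough_eq_range, lineThrough_eq_range,
    ← (Equiv.subLeft (1 : ℝ)).surjective.range_comp (AffineMap.lineMap a b)]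
  exact congrArg range (funext fun t ↦ AffineMap.lineMap_apply_one_sub a b t)

lemma linesOf_eq_image_chordLine (p : Fin k → ℝ²) : linesOf p = chordLine p '' chords k := by
  ext L
  constructor
  · rintro ⟨i, j, hij, rfl⟩
    rcases hij.lt_or_gt with h | h
    · exact ⟨(i, j), mem_chords.2 h, rfl⟩
    · exact ⟨(j, i), mem_chords.2 h, lineThrough_comm _ _⟩
  · rintro ⟨q, hq, rfl⟩
    exact ⟨q.1, q.2, (mem_chords.1 hq).ne, rfl⟩

lemma linesOf_comp_perm (p : Fin k → ℝ²) (σ : Equiv.Perm (Fin k)) :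
    linesOf (p ∘ σ) = linesOf p := by
  ext L
  constructor
  · rintro ⟨i, j, hij, rfl⟩
    exact ⟨σ i, σ j, σ.injective.ne hij, rfl⟩
  · rintro ⟨i, j, hij, rfl⟩
    exact ⟨σ.symm i, σ.symm j, σ.symm.injective.ne hij, by simp⟩

lemma existsUnique_mem_image_iff {α β : Type*} {g : α → β} {A : Set α} (hg : InjOn g A)
    (P : β → Prop) : (∃! b, b ∈ g '' A ∧ P b) ↔ ∃! a, a ∈ A ∧ P (g a) := by
  constructor
  · rintro ⟨_, ⟨⟨a, ha, rfl⟩, hP⟩, huniq⟩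
    exact ⟨a, ⟨ha, hP⟩, fun a' h ↦ hg h.1 ha (huniq _ ⟨mem_image_of_mem g h.1, h.2⟩)⟩
  · rintro ⟨a, ⟨ha, hP⟩, huniq⟩
    refine ⟨g a, ⟨mem_image_of_mem g ha, hP⟩, ?_⟩
    rintro _ ⟨⟨a', ha', rfl⟩, hP'⟩
    rw [huniq a' ⟨ha', hP'⟩]

namespace IsCounterclockwise

lemma mem_chordLine_iff (hp : IsCounterclockwise p) (hk : 3 ≤ k) (hq : q ∈ chords k) :
    x ∈ chordLine p q ↔ chordForm p q x = 0 := by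
  rw [chordLine, mem_lineThrough_iff (hp.vertex_ne hk hq), chordForm_apply_eq_zero]

lemma injOn_chordLine (hp : IsCounterclockwise p) (hk : 3 ≤ k) :
    InjOn (chordLine p) (chords k) := by
  intro q hq m hm hqm
  by_contra hne
  refine hp.chordForm_endpoints_ne_zero hq hm hne ?_
  rw [← hp.mem_chordLine_iff hk hm, ← hp.mem_chordLine_iff hk hm, ← hqm,
    hp.mem_chordLine_iff hk hq, hp.mem_chordLine_iff hk hq]
  exact ⟨(hp.chordForm_vertex_eq_zero hq).2 (.inl rfl),
    (hp.chordForm_vertex_eq_zero hq).2 (.inr rfl)⟩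

lemma existsUnique_mem_linesOf_iff (hp : IsCounterclockwise p) (hk : 3 ≤ k) :
    (∃! L, L ∈ linesOf p ∧ x ∈ L) ↔ ∃! q, q ∈ chords k ∧ chordForm p q x = 0 := by
  rw [linesOf_eq_image_chordLine, existsUnique_mem_image_iff (hp.injOn_chordLine hk)]
  exact existsUnique_congr fun q ↦ and_congr_right fun hq ↦ hp.mem_chordLine_iff hk hq

lemma freePts_eq (hp : IsCounterclockwise p) (hk : 3 ≤ k) :
    freePts p = freeSet (chordForm p) (chords k) := by
  ext x
  simp only [freePts, linesOf_eq_image_chordLine, forall_mem_image, freeSet, mem_ofPred_eq,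
    Finset.mem_coe]
  exact forall₂_congr fun q hq ↦ (hp.mem_chordLine_iff hk hq).not

lemma chambersOf_eq (hp : IsCounterclockwise p) (hk : 3 ≤ k) :
    chambersOf p = cellsMeeting (chordForm p) (chords k) univ := by
  ext C
  simp only [chambersOf, hp.freePts_eq hk, cellsMeeting, univ_inter, mem_ofPred_eq, mem_image]
  refine exists_congr fun x ↦ and_congr_right fun hx ↦ ?_
  rw [connectedComponentIn_freeSet (fun q _ ↦ continuous_chordForm p q) hx, eq_comm]

lemma chambersOf_subset_convexHull_eq (hp : IsCounterclockwise p) (hk : 3 ≤ k) :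
    {C ∈ chambersOf p | C ⊆ convexHull ℝ (range p)} =
      cellsMeeting (chordForm p) (chords k) (openPolygon p) := by
  have hsides := sides_subset_chords (show 2 ≤ k by omega)
  rw [hp.chambersOf_eq hk]
  ext C
  constructor
  · rintro ⟨⟨x, ⟨-, hx⟩, rfl⟩, hC⟩
    exact ⟨x, ⟨mem_openPolygon.2 fun n hn ↦
      (hp.chordForm_nonneg_of_mem_convexHull hn (hC self_mem_faceAt)).lt_of_ne'
        (hx n (hsides hn)), hx⟩, rfl⟩
  · rintro ⟨x, ⟨hx, hfree⟩, rfl⟩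
    refine ⟨⟨x, ⟨mem_univ x, hfree⟩, rfl⟩, fun y hy ↦ hp.openPolygon_subset_convexHull hk ?_⟩
    rw [openPolygon, ← faceAt_mem_cellsMeeting_signCell hsides (faceAt_subset_freeSet hfree hy),
      faceAt_eq_of_mem hy]
    exact ⟨x, ⟨hx, hfree⟩, rfl⟩

lemma edgeBoundaryOf_eq (hp : IsCounterclockwise p) (hk : 3 ≤ k) (V : Set ℝ²) :
    edgeBoundaryOf p (cellsMeeting (chordForm p) (chords k) V) =
      cellBoundary (chordForm p) (chords k) V := by
  ext ⟨C, D⟩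
  simp only [edgeBoundaryOf, AdjOf, cellBoundary, hp.chambersOf_eq hk,
    hp.existsUnique_mem_linesOf_iff hk, mem_ofPred_eq, mem_sdiff, mem_inter_iff, and_assoc]
  constructor
  · rintro ⟨hC, hD, -, hD', -, hz⟩
    exact ⟨hC, hD', hD, hz⟩
  · rintro ⟨hC, hD', hD, hz⟩
    exact ⟨hC, hD, image_mono (inter_subset_inter_left _ (subset_univ V)) hC, hD',
      ne_of_mem_of_not_mem hC hD, hz⟩

lemma noThreeConcurrent (hp : IsCounterclockwise p) (hk : 3 ≤ k)
    (hgen : ∀ x ∈ interior (convexHull ℝ (range p)), {L ∈ linesOf p | x ∈ L}.ncard ≤ 2) :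
    NoThreeConcurrent p := by
  intro x hx s hs hsx
  have hfin : {L ∈ linesOf p | x ∈ L}.Finite := by
    rw [linesOf_eq_image_chordLine]
    exact ((chords k).finite_toSet.image _).subset (sep_subset _ _)
  have hsub : chordLine p '' s ⊆ {L ∈ linesOf p | x ∈ L} := by
    rintro _ ⟨q, hq, rfl⟩
    refine ⟨?_, (hp.mem_chordLine_iff hk (hs hq)).2 (hsx q hq)⟩
    rw [linesOf_eq_image_chordLine]
    exact mem_image_of_mem _ (hs hq)
  have hint : x ∈ interior (convexHull ℝ (range p)) :=
    interior_maximal (hp.openPolygon_subset_convexHull hk) (isOpen_openPolygon p) hx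
  calc s.card = (chordLine p '' s).ncard := by
        rw [((hp.injOn_chordLine hk).mono (Finset.coe_subset.2 hs)).ncard_image,
          ncard_coe_finset]
    _ ≤ {L ∈ linesOf p | x ∈ L}.ncard := ncard_le_ncard hsub hfin
    _ ≤ 2 := hgen x hint

lemma ncard_chambersOf_subset_convexHull (hp : IsCounterclockwise p) (hk : 3 ≤ k)
    (hgen : ∀ x ∈ interior (convexHull ℝ (range p)), {L ∈ linesOf p | x ∈ L}.ncard ≤ 2) :
    {C ∈ chambersOf p | C ⊆ convexHull ℝ (range p)}.ncard =
      k.choose 4 + k.choose 2 - k + 1 := by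
  have hgen' := hp.noThreeConcurrent hk hgen
  have hconv : Convex ℝ (openPolygon p) := convex_signCell _ _ _
  rw [hp.chambersOf_subset_convexHull_eq hk, ncard,
    encard_cellsMeeting_eq_encard_flatsMeeting hconv (hp.isSimpleOn_openPolygon hk hgen'),
    hp.encard_flatsMeeting_openPolygon hk hgen', ENat.toNat_natCast]

lemma ncard_edgeBoundaryOf (hp : IsCounterclockwise p) (hk : 3 ≤ k) :
    (edgeBoundaryOf p {C ∈ chambersOf p | C ⊆ convexHull ℝ (range p)}).ncard = k := by
  have hfacet : ∀ q ∈ sides k, (openFacet (chordForm p) (sides k) q).Nonempty := by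
    intro q hq
    rw [hp.openFacet_eq_openSegment hk hq]
    exact ⟨_, midpoint_mem_openSegment _ _⟩
  rw [hp.chambersOf_subset_convexHull_eq hk, hp.edgeBoundaryOf_eq hk, ncard, openPolygon,
    encard_cellBoundary (fun q _ ↦ continuous_chordForm p q) (sides_subset_chords (by omega))
      (hp.openPolygon_nonempty hk) hfacet fun q hq ↦ hp.openFacet_subset_freeSet hk hq,
    card_sides hk, ENat.toNat_natCast]

end IsCounterclockwise

lemma convexIndependent_of_notMem_convexHull_image_ne {ι E : Type*} [AddCommGroup E] [Module ℝ E]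
    {p : ι → E} (h : ∀ i, p i ∉ convexHull ℝ (p '' {j | j ≠ i})) : ConvexIndependent ℝ p :=
  convexIndependent_iff_notMem_convexHull_sdiff.2 fun i _ hi ↦
    h i (convexHull_mono (image_mono fun _ hj ↦ hj.2) hi)

end Chambers

section Asymptotics

variable {k : ℕ}

lemma choose_four_add_choose_two_sub_add_one (j : ℕ) :
    24 * ((j + 3).choose 4 + (j + 3).choose 2 - (j + 3) + 1) =
      j ^ 4 + 6 * j ^ 3 + 23 * j ^ 2 + 42 * j + 24 := by
  have h₄ : (j + 3) * (j + 2) * (j + 1) * j = 24 * (j + 3).choose 4 := by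
    have h := Nat.descFactorial_eq_factorial_mul_choose (j + 3) 4
    simp only [Nat.descFactorial, Nat.factorial] at h
    grind
  have h₂ : (j + 3) * (j + 2) = 2 * (j + 3).choose 2 := by
    have h := Nat.descFactorial_eq_factorial_mul_choose (j + 3) 2
    simp only [Nat.descFactorial, Nat.factorial] at h
    grind
  have hle : j + 3 ≤ (j + 3).choose 2 := by nlinarith
  zify [hle.trans (Nat.le_add_left _ ((j + 3).choose 4))] at h₄ h₂ ⊢
  linear_combination -h₄ - 12 * h₂

lemma choose_four_add_choose_two_le_pow (hk : 3 ≤ k) :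
    k.choose 4 + k.choose 2 - k + 1 ≤ k ^ 4 := by
  obtain ⟨j, rfl⟩ := Nat.exists_eq_add_of_le' hk
  have h := choose_four_add_choose_two_sub_add_one j
  nlinarith

lemma pow_le_mul_choose_four_add_choose_two (hk : 3 ≤ k) :
    k ^ 4 ≤ 3 ^ 4 * (k.choose 4 + k.choose 2 - k + 1) := by
  obtain ⟨j, rfl⟩ := Nat.exists_eq_add_of_le' hk
  have h := choose_four_add_choose_two_sub_add_one j
  nlinarith

lemma rpow_one_div_four_le {a b : ℕ} (h : a ≤ b ^ 4) : (a : ℝ) ^ ((1 : ℝ) / 4) ≤ b := by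
  rw [one_div, Real.rpow_inv_le_iff_of_pos (by positivity) (by positivity) four_pos]
  exact_mod_cast h

lemma le_mul_rpow_one_div_four {a b c : ℕ} (h : b ^ 4 ≤ c ^ 4 * a) :
    (b : ℝ) ≤ c * (a : ℝ) ^ ((1 : ℝ) / 4) := by
  rw [← Real.pow_rpow_inv_natCast (Nat.cast_nonneg c) four_ne_zero, Nat.cast_ofNat, one_div,
    ← Real.mul_rpow (by positivity) (by positivity),
    Real.le_rpow_inv_iff_of_pos (by positivity) (by positivity) four_pos]
  exact_mod_cast h

end Asymptotics

theorem stmt18_general {k : ℕ} (hk : 3 ≤ k) {p : Fin k → ℝ²} (hconv : ConvexIndependent ℝ p)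
    (hgen : ∀ x ∈ interior (convexHull ℝ (range p)), {L ∈ linesOf p | x ∈ L}.ncard ≤ 2) :
    {C ∈ chambersOf p | C ⊆ convexHull ℝ (range p)}.ncard = k.choose 4 + k.choose 2 - k + 1 ∧
    (edgeBoundaryOf p {C ∈ chambersOf p | C ⊆ convexHull ℝ (range p)}).ncard = k ∧
    ({C ∈ chambersOf p | C ⊆ convexHull ℝ (range p)}.ncard : ℝ) ^ ((1 : ℝ) / 4) ≤
      (edgeBoundaryOf p {C ∈ chambersOf p | C ⊆ convexHull ℝ (range p)}).ncard ∧
    ((edgeBoundaryOf p {C ∈ chambersOf p | C ⊆ convexHull ℝ (range p)}).ncard : ℝ) ≤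
      3 * ({C ∈ chambersOf p | C ⊆ convexHull ℝ (range p)}.ncard : ℝ) ^ ((1 : ℝ) / 4) := by
  obtain ⟨σ, hσ⟩ := exists_perm_isCounterclockwise hconv
  have hrange : range (p ∘ σ) = range p := σ.surjective.range_comp p
  have hlines : linesOf (p ∘ σ) = linesOf p := linesOf_comp_perm p σ
  have hchambers := hσ.ncard_chambersOf_subset_convexHull hk (by rwa [hrange, hlines])
  have hboundary := hσ.ncard_edgeBoundaryOf hk
  simp only [edgeBoundaryOf, AdjOf, chambersOf, freePts, hrange, hlines] at hchambers hboundary ⊢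
  rw [hchambers, hboundary]
  exact ⟨rfl, rfl, rpow_one_div_four_le (choose_four_add_choose_two_le_pow hk),
    mod_cast le_mul_rpow_one_div_four (pow_le_mul_choose_four_add_choose_two hk)⟩

/-- Let `k ≥ 4` points lie on a circle in convex position, such
that no three of the lines through pairs of them meet at a common point interior to
the polygon `P = conv{p₁,…,p_k}`.  For the (non-general-position) arrangement `𝓗` of
all `C(k,2)` lines through pairs, the set `S` of chambers contained in `P` satisfies
`|S| = C(k,4) + C(k,2) − k + 1` and `|∂S| = k`; in particular
`|∂S| = Θ(|S|^{1/4})`. -/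
theorem stmt18 (k : ℕ) (hk : 4 ≤ k) (p : Fin k → EuclideanSpace ℝ (Fin 2))
    (o : EuclideanSpace ℝ (Fin 2)) (r : ℝ) (hr : 0 < r)
    (hcirc : ∀ i, dist (p i) o = r)
    (hconv : ∀ i : Fin k, p i ∉ convexHull ℝ (p '' {j | j ≠ i}))
    (hgen : ∀ x ∈ interior (convexHull ℝ (Set.range p)),
      {L ∈ linesOf p | x ∈ L}.ncard ≤ 2) :
    {C ∈ chambersOf p | C ⊆ convexHull ℝ (Set.range p)}.ncard =
        Nat.choose k 4 + Nat.choose k 2 - k + 1 ∧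
    (edgeBoundaryOf p {C ∈ chambersOf p | C ⊆ convexHull ℝ (Set.range p)}).ncard
        = k ∧
    ∃ c₁ c₂ : ℝ, 0 < c₁ ∧ 0 < c₂ ∧
      c₁ * ({C ∈ chambersOf p | C ⊆ convexHull ℝ (Set.range p)}.ncard : ℝ) ^
          ((1 : ℝ) / 4) ≤
        ((edgeBoundaryOf p
            {C ∈ chambersOf p | C ⊆ convexHull ℝ (Set.range p)}).ncard : ℝ) ∧
      ((edgeBoundaryOf p
            {C ∈ chambersOf p | C ⊆ convexHull ℝ (Set.range p)}).ncard : ℝ) ≤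
        c₂ * ({C ∈ chambersOf p | C ⊆ convexHull ℝ (Set.range p)}.ncard : ℝ) ^
          ((1 : ℝ) / 4) := by
  obtain ⟨hchambers, hboundary, hlower, hupper⟩ :=
    stmt18_general (by omega) (convexIndependent_of_notMem_convexHull_image_ne hconv) hgen
  exact ⟨hchambers, hboundary, 1, 3, one_pos, three_pos, by rwa [one_mul], hupper⟩
end
end
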